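/- arXiv:1909.07173 — 3 statements merged into one kernel-verified Lean document; each statement's English description precedes it below -/
import Mathlib

section
/- Let U² be the orthogonal direct sum of two copies of the hyperbolic plane, with standard basis {e₁, f₁, e₂, f₂}. Then SO^+(U²) is generated by the four Eichler transvections t(e₂,e₁), t(e₂,f₁), t(f₂,e₁) and t(f₂,f₁). -/
open Matrix

/-- The ℝ-bilinear extension of the integral bilinear form with Gram matrix `M`. -/
def bilinR {ι : Type*} [Fintype ι] (M : Matrix ι ι ℤ) (x y : ι → ℝ) : ℝ :=
  x ⬝ᵥ ((M.map (Int.cast : ℤ → ℝ)) *ᵥ y)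

/-- `w` is a tuple of vectors of `L ⊗ ℝ` spanning a maximal positive definite subspace:
its Gram matrix is positive definite and no longer tuple has positive definite Gram matrix. -/
def IsMaxPosTuple {ι : Type*} [Fintype ι] (M : Matrix ι ι ℤ) {k : ℕ}
    (w : Fin k → ι → ℝ) : Prop :=
  (Matrix.of fun i j => bilinR M (w i) (w j)).PosDef ∧
    ∀ w' : Fin (k + 1) → ι → ℝ,
      ¬ (Matrix.of fun i j => bilinR M (w' i) (w' j)).PosDef

/-- `g` preserves the orientation of the positive cone of the lattice with Gram matrix `M`:
for every basis `w` of a maximal positive definite subspace `W` of `L ⊗ ℝ`, the determinant of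
the matrix `(B(wᵢ, g wⱼ))` (which equals, up to the positive factor `det (Gram w)`, the
determinant of the orthogonal projection of `g|_W` back to `W`) is positive. -/
def OrientPres {ι : Type*} [Fintype ι] (M : Matrix ι ι ℤ) (g : Matrix ι ι ℤ) : Prop :=
  ∀ (k : ℕ) (w : Fin k → ι → ℝ), IsMaxPosTuple M w →
    0 < (Matrix.of fun i j : Fin k =>
          bilinR M (w i) ((g.map (Int.cast : ℤ → ℝ)) *ᵥ w j)).det

/-- `g` is an isometry of the lattice with Gram matrix `M`. -/
def IsIsometry {ι : Type*} [Fintype ι] (M : Matrix ι ι ℤ) (g : Matrix ι ι ℤ) : Prop :=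
  gᵀ * M * g = M

/-- A vector of a lattice is primitive if it is divisible only by units. -/
def IsPrimitiveVec {ι : Type*} (l : ι → ℤ) : Prop :=
  ∀ (c : ℤ) (x : ι → ℤ), l = c • x → IsUnit c

/-- The Eichler transvection `t(e,a) : v ↦ v - (a,v)e + (e,v)a - m(e,v)e` of the lattice with
Gram matrix `M`, where `(e,e) = 0`, `(e,a) = 0` and `(a,a) = 2m`, written as a matrix. -/
def tMat {ι : Type*} [Fintype ι] [DecidableEq ι] (M : Matrix ι ι ℤ) (e a : ι → ℤ) (m : ℤ) :
    Matrix ι ι ℤ :=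
  1 - Matrix.vecMulVec e (M *ᵥ a) + Matrix.vecMulVec a (M *ᵥ e) - m • Matrix.vecMulVec e (M *ᵥ e)

/-- The Gram matrix of `U² = U ⊕ U` in the standard basis `e₁, f₁, e₂, f₂`. -/
def U2G : Matrix (Fin 4) (Fin 4) ℤ :=
  !![0,1,0,0;
     1,0,0,0;
     0,0,0,1;
     0,0,1,0]

def e1 : Fin 4 → ℤ := ![1,0,0,0]
def f1 : Fin 4 → ℤ := ![0,1,0,0]
def e2 : Fin 4 → ℤ := ![0,0,1,0]
def f2 : Fin 4 → ℤ := ![0,0,0,1]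

lemma bil_eq (x y : Fin 4 → ℝ) :
    bilinR U2G x y = x 0 * y 1 + x 1 * y 0 + x 2 * y 3 + x 3 * y 2 := by
  simp [bilinR, U2G, Matrix.mulVec, dotProduct, Fin.sum_univ_four]

lemma bil_symm (x y : Fin 4 → ℝ) : bilinR U2G x y = bilinR U2G y x := by
  rw [bil_eq, bil_eq]; ring

lemma bil_add_left (x y z : Fin 4 → ℝ) :
    bilinR U2G (x + y) z = bilinR U2G x z + bilinR U2G y z := by
  simp only [bil_eq, Pi.add_apply]; ring

lemma bil_smul_left (c : ℝ) (x z : Fin 4 → ℝ) :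
    bilinR U2G (c • x) z = c * bilinR U2G x z := by
  simp only [bil_eq, Pi.smul_apply, smul_eq_mul]; ring

lemma bil_add_right (x y z : Fin 4 → ℝ) :
    bilinR U2G z (x + y) = bilinR U2G z x + bilinR U2G z y := by
  simp only [bil_eq, Pi.add_apply]; ring

lemma bil_smul_right (c : ℝ) (x z : Fin 4 → ℝ) :
    bilinR U2G z (c • x) = c * bilinR U2G z x := by
  simp only [bil_eq, Pi.smul_apply, smul_eq_mul]; ring

lemma bil_sum_left {k : ℕ} (f : Fin k → Fin 4 → ℝ) (z : Fin 4 → ℝ) :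
    bilinR U2G (∑ i, f i) z = ∑ i, bilinR U2G (f i) z := by
  simp [bil_eq, Finset.sum_mul, Finset.sum_add_distrib]

lemma bil_sum_right {k : ℕ} (f : Fin k → Fin 4 → ℝ) (z : Fin 4 → ℝ) :
    bilinR U2G z (∑ i, f i) = ∑ i, bilinR U2G z (f i) := by
  simp [bil_eq, Finset.mul_sum, Finset.sum_add_distrib]

lemma gram_quad {k : ℕ} (w : Fin k → Fin 4 → ℝ) (x : Fin k → ℝ) :
    star x ⬝ᵥ ((Matrix.of fun i j => bilinR U2G (w i) (w j)) *ᵥ x) =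
      bilinR U2G (∑ i, x i • w i) (∑ i, x i • w i) := by
  simp only [bil_sum_left, bil_sum_right, bil_smul_left, bil_smul_right]
  simp only [dotProduct, mulVec, Matrix.of_apply, Pi.star_apply, star_trivial, Finset.mul_sum]
  refine Finset.sum_congr rfl fun i _ => Finset.sum_congr rfl fun j _ => ?_
  rw [bil_symm (w j) (w i)]
  ring

lemma gram_herm {k : ℕ} (w : Fin k → Fin 4 → ℝ) :
    (Matrix.of fun i j => bilinR U2G (w i) (w j)).IsHermitian := by
  ext i j
  simp [bil_symm (w i) (w j)]

/-- real isometries -/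
def RIso (S : Matrix (Fin 4) (Fin 4) ℝ) : Prop :=
  Sᵀ * (U2G.map (Int.cast : ℤ → ℝ)) * S = U2G.map (Int.cast : ℤ → ℝ)

lemma RIso.bil {S : Matrix (Fin 4) (Fin 4) ℝ} (h : RIso S) (x y : Fin 4 → ℝ) :
    bilinR U2G (S *ᵥ x) (S *ᵥ y) = bilinR U2G x y := by
  unfold bilinR
  rw [dotProduct_mulVec, ← vecMul_transpose, vecMul_vecMul, ← dotProduct_mulVec, mulVec_mulVec,
    h]

lemma RIso.mul {S T : Matrix (Fin 4) (Fin 4) ℝ} (hS : RIso S) (hT : RIso T) : RIso (S * T) := by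
  unfold RIso at *
  calc (S * T)ᵀ * (U2G.map (Int.cast : ℤ → ℝ)) * (S * T)
      = Tᵀ * (Sᵀ * (U2G.map (Int.cast : ℤ → ℝ)) * S) * T := by
        rw [Matrix.transpose_mul]; simp only [Matrix.mul_assoc]
    _ = _ := by rw [hS, hT]

lemma map_mul' (g h : Matrix (Fin 4) (Fin 4) ℤ) :
    (g * h).map (Int.cast : ℤ → ℝ) = g.map (Int.cast : ℤ → ℝ) * h.map (Int.cast : ℤ → ℝ) :=
  Matrix.map_mul (f := Int.castRingHom ℝ)

lemma RIso_of {g : Matrix (Fin 4) (Fin 4) ℤ} (h : IsIsometry U2G g) :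
    RIso (g.map (Int.cast : ℤ → ℝ)) := by
  unfold RIso
  rw [← Matrix.transpose_map, ← map_mul', ← map_mul', h]

lemma det_ne {k : ℕ} {w : Fin k → Fin 4 → ℝ} (hw : IsMaxPosTuple U2G w)
    {S : Matrix (Fin 4) (Fin 4) ℝ} (hS : RIso S) :
    (Matrix.of fun i j : Fin k => bilinR U2G (w i) (S *ᵥ w j)).det ≠ 0 := by
  intro h0
  obtain ⟨c, hc, hc0⟩ := Matrix.exists_mulVec_eq_zero_iff.mpr h0
  set V : Fin 4 → ℝ := ∑ j, c j • w j with hV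
  have hVV : 0 < bilinR U2G V V := by
    have := hw.1.dotProduct_mulVec_pos hc
    rwa [gram_quad] at this
  have hperp : ∀ i, bilinR U2G (w i) (S *ᵥ V) = 0 := by
    intro i
    have := congrFun hc0 i
    simp only [mulVec, dotProduct, Matrix.of_apply, Pi.zero_apply] at this
    rw [hV, Matrix.mulVec_sum, bil_sum_right, ← this]
    refine Finset.sum_congr rfl fun j _ => ?_
    rw [Matrix.mulVec_smul, bil_smul_right]; exact mul_comm _ _
  refine hw.2 (Fin.cons (S *ᵥ V) w) ?_
  refine .of_dotProduct_mulVec_pos (gram_herm _) fun x hx => ?_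
  rw [gram_quad, Fin.sum_univ_succ]
  simp only [Fin.cons_zero, Fin.cons_succ]
  set Y : Fin 4 → ℝ := ∑ i : Fin k, x i.succ • w i with hY
  have hYV : bilinR U2G Y (S *ᵥ V) = 0 := by
    rw [hY, bil_sum_left]
    exact Finset.sum_eq_zero fun i _ => by rw [bil_smul_left, hperp, mul_zero]
  rw [bil_add_left, bil_add_right, bil_add_right, bil_smul_left, bil_smul_right, bil_smul_left,
    bil_smul_right, hYV, bil_symm _ Y, hYV, hS.bil]
  by_cases hx' : (fun i : Fin k => x i.succ) = 0
  · have hx0 : x 0 ≠ 0 := by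
      intro h
      apply hx
      ext i
      refine Fin.cases h (fun j => congrFun hx' j) i
    have : Y = 0 := by
      rw [hY]
      exact Finset.sum_eq_zero fun i _ => by rw [show x i.succ = 0 from congrFun hx' i, zero_smul]
    have h3 : bilinR U2G Y Y = 0 := by rw [this, bil_eq]; simp
    rw [h3]
    have : 0 < x 0 * x 0 := mul_self_pos.mpr hx0
    nlinarith [mul_pos this hVV]
  · have h2 : 0 < bilinR U2G Y Y := by
      have := hw.1.dotProduct_mulVec_pos hx'
      rwa [gram_quad] at this
    nlinarith [mul_nonneg (mul_self_nonneg (x 0)) hVV.le]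

lemma orient_path {T : ℝ → Matrix (Fin 4) (Fin 4) ℝ} (hc : Continuous T)
    (hT : ∀ s, RIso (T s)) {g h : Matrix (Fin 4) (Fin 4) ℤ}
    (h0 : T 0 = g.map (Int.cast : ℤ → ℝ)) (h1 : T 1 = h.map (Int.cast : ℤ → ℝ))
    (hg : OrientPres U2G g) : OrientPres U2G h := by
  intro k w hw
  set F : ℝ → ℝ := fun s => (Matrix.of fun i j : Fin k => bilinR U2G (w i) (T s *ᵥ w j)).det
    with hF
  have hFc : Continuous F := by
    refine Continuous.matrix_det ?_
    refine continuous_matrix fun i j => ?_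
    simp only [Matrix.of_apply, bil_eq]
    have : Continuous fun s => T s *ᵥ w j := hc.matrix_mulVec continuous_const
    fun_prop
  have hne : ∀ s, F s ≠ 0 := fun s => det_ne hw (hT s)
  have hF0 : 0 < F 0 := by
    have := hg k w hw
    rw [← h0] at this
    exact this
  have hF1 : 0 < F 1 := by
    by_contra hn
    push Not at hn
    have := intermediate_value_Icc' (zero_le_one' ℝ) hFc.continuousOn
    obtain ⟨s, _, hs⟩ := this ⟨hn, hF0.le⟩
    exact hne s hs
  rw [← h1]
  exact hF1

lemma orient_one : OrientPres U2G 1 := by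
  intro k w hw
  have : ((1 : Matrix (Fin 4) (Fin 4) ℤ).map (Int.cast : ℤ → ℝ)) = 1 := by
    exact Matrix.map_one _ (by simp) (by simp)
  simp only [this, Matrix.one_mulVec]
  exact hw.1.det_pos

/-- product path -/
lemma orient_mul_iff {T : ℝ → Matrix (Fin 4) (Fin 4) ℝ} (hc : Continuous T)
    (hT : ∀ s, RIso (T s)) {g h : Matrix (Fin 4) (Fin 4) ℤ}
    (h0 : T 0 = 1) (h1 : T 1 = h.map (Int.cast : ℤ → ℝ)) (hg : IsIsometry U2G g) :
    OrientPres U2G g ↔ OrientPres U2G (h * g) := by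
  have hc' : Continuous fun s => T s * g.map (Int.cast : ℤ → ℝ) := hc.matrix_mul continuous_const
  have hT' : ∀ s, RIso (T s * g.map (Int.cast : ℤ → ℝ)) := fun s => (hT s).mul (RIso_of hg)
  constructor
  · exact orient_path hc' hT' (by simp [h0]) (by simp only [h1, map_mul'])
  · exact orient_path (T := fun s => T (1 - s) * g.map (Int.cast : ℤ → ℝ))
      (hc'.comp (by fun_prop : Continuous fun s : ℝ => 1 - s)) (fun s => hT' _)
      (by simp only [sub_zero, h1, map_mul']) (by simp [h0])

def A1 {R : Type} [CommRing R] (n : R) : Matrix (Fin 4) (Fin 4) R :=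
  !![1,0,0,n; 0,1,0,0; 0,-n,1,0; 0,0,0,1]
def A2 {R : Type} [CommRing R] (n : R) : Matrix (Fin 4) (Fin 4) R :=
  !![1,0,0,0; 0,1,0,n; -n,0,1,0; 0,0,0,1]
def A3 {R : Type} [CommRing R] (n : R) : Matrix (Fin 4) (Fin 4) R :=
  !![1,0,n,0; 0,1,0,0; 0,0,1,0; 0,-n,0,1]
def A4 {R : Type} [CommRing R] (n : R) : Matrix (Fin 4) (Fin 4) R :=
  !![1,0,0,0; 0,1,n,0; 0,0,1,0; -n,0,0,1]

lemma gen1 : tMat U2G e2 e1 0 = A1 1 := by decide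
lemma gen2 : tMat U2G e2 f1 0 = A2 1 := by decide
lemma gen3 : tMat U2G f2 e1 0 = A3 1 := by decide
lemma gen4 : tMat U2G f2 f1 0 = A4 1 := by decide

/-- good elements -/
def Good (h : Matrix (Fin 4) (Fin 4) ℤ) : Prop :=
  IsIsometry U2G h ∧ h.det = 1 ∧
    ∀ g, IsIsometry U2G g → (OrientPres U2G g ↔ OrientPres U2G (h * g))

lemma riso_ext {S : Matrix (Fin 4) (Fin 4) ℝ}
    (h : ∀ i j, (Sᵀ * (U2G.map (Int.cast : ℤ → ℝ)) * S) i j = (U2G i j : ℝ)) : RIso S := by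
  ext i j; exact h i j

lemma good1 : Good (A1 1) := by
  refine ⟨by unfold IsIsometry; decide, by decide, fun g hg => ?_⟩
  refine orient_mul_iff (T := A1) ?_ ?_ ?_ ?_ hg
  · refine continuous_matrix fun i j => ?_
    fin_cases i <;> fin_cases j <;> simp [A1] <;> fun_prop
  · intro s
    refine riso_ext fun i j => ?_
    fin_cases i <;> fin_cases j <;> simp [A1, U2G, Matrix.mul_apply, Fin.sum_univ_four]
  · ext i j; fin_cases i <;> fin_cases j <;> simp [A1]
  · ext i j; fin_cases i <;> fin_cases j <;> simp [A1]

lemma good2 : Good (A2 1) := by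
  refine ⟨by unfold IsIsometry; decide, by decide, fun g hg => ?_⟩
  refine orient_mul_iff (T := A2) ?_ ?_ ?_ ?_ hg
  · refine continuous_matrix fun i j => ?_
    fin_cases i <;> fin_cases j <;> simp [A2] <;> fun_prop
  · intro s
    refine riso_ext fun i j => ?_
    fin_cases i <;> fin_cases j <;> simp [A2, U2G, Matrix.mul_apply, Fin.sum_univ_four]
  · ext i j; fin_cases i <;> fin_cases j <;> simp [A2]
  · ext i j; fin_cases i <;> fin_cases j <;> simp [A2]

lemma good3 : Good (A3 1) := by
  refine ⟨by unfold IsIsometry; decide, by decide, fun g hg => ?_⟩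
  refine orient_mul_iff (T := A3) ?_ ?_ ?_ ?_ hg
  · refine continuous_matrix fun i j => ?_
    fin_cases i <;> fin_cases j <;> simp [A3] <;> fun_prop
  · intro s
    refine riso_ext fun i j => ?_
    fin_cases i <;> fin_cases j <;> simp [A3, U2G, Matrix.mul_apply, Fin.sum_univ_four]
  · ext i j; fin_cases i <;> fin_cases j <;> simp [A3]
  · ext i j; fin_cases i <;> fin_cases j <;> simp [A3]

lemma good4 : Good (A4 1) := by
  refine ⟨by unfold IsIsometry; decide, by decide, fun g hg => ?_⟩
  refine orient_mul_iff (T := A4) ?_ ?_ ?_ ?_ hg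
  · refine continuous_matrix fun i j => ?_
    fin_cases i <;> fin_cases j <;> simp [A4] <;> fun_prop
  · intro s
    refine riso_ext fun i j => ?_
    fin_cases i <;> fin_cases j <;> simp [A4, U2G, Matrix.mul_apply, Fin.sum_univ_four]
  · ext i j; fin_cases i <;> fin_cases j <;> simp [A4]
  · ext i j; fin_cases i <;> fin_cases j <;> simp [A4]

lemma iso_mul {g h : Matrix (Fin 4) (Fin 4) ℤ} (hg : IsIsometry U2G g) (hh : IsIsometry U2G h) :
    IsIsometry U2G (g * h) := by
  unfold IsIsometry at *
  calc (g * h)ᵀ * U2G * (g * h) = hᵀ * (gᵀ * U2G * g) * h := by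
        rw [Matrix.transpose_mul]; simp only [Matrix.mul_assoc]
    _ = _ := by rw [hg, hh]

lemma iso_inv {u : (Matrix (Fin 4) (Fin 4) ℤ)ˣ} (hg : IsIsometry U2G u.1) :
    IsIsometry U2G (u⁻¹).1 := by
  unfold IsIsometry at *
  have hu : u.1 * (u⁻¹).1 = 1 := u.mul_inv
  have hu' : ((u⁻¹).1)ᵀ * (u.1)ᵀ = 1 := by rw [← Matrix.transpose_mul, hu, Matrix.transpose_one]
  calc ((u⁻¹).1)ᵀ * U2G * (u⁻¹).1
      = ((u⁻¹).1)ᵀ * ((u.1)ᵀ * U2G * u.1) * (u⁻¹).1 := by rw [hg]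
    _ = (((u⁻¹).1)ᵀ * (u.1)ᵀ) * U2G * (u.1 * (u⁻¹).1) := by simp only [Matrix.mul_assoc]
    _ = _ := by rw [hu, hu', one_mul, mul_one]

/-- the generated group -/
def HH : Subgroup (Matrix (Fin 4) (Fin 4) ℤ)ˣ := Subgroup.closure
        {g : (Matrix (Fin 4) (Fin 4) ℤ)ˣ |
          (g : Matrix (Fin 4) (Fin 4) ℤ) = tMat U2G e2 e1 0 ∨
          (g : Matrix (Fin 4) (Fin 4) ℤ) = tMat U2G e2 f1 0 ∨
          (g : Matrix (Fin 4) (Fin 4) ℤ) = tMat U2G f2 e1 0 ∨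
          (g : Matrix (Fin 4) (Fin 4) ℤ) = tMat U2G f2 f1 0}

lemma HH_good {u : (Matrix (Fin 4) (Fin 4) ℤ)ˣ} (hu : u ∈ HH) : Good u.1 := by
  induction hu using Subgroup.closure_induction with
  | mem x hx =>
    rcases hx with h | h | h | h
    · rw [h, gen1]; exact good1
    · rw [h, gen2]; exact good2
    · rw [h, gen3]; exact good3
    · rw [h, gen4]; exact good4
  | one => exact ⟨by unfold IsIsometry; simp, by simp, fun g _ => by simp⟩
  | mul x y _ _ hx hy =>
    refine ⟨iso_mul hx.1 hy.1, ?_, fun g hg => ?_⟩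
    · rw [Units.val_mul, Matrix.det_mul, hx.2.1, hy.2.1, one_mul]
    · rw [Units.val_mul, Matrix.mul_assoc, hy.2.2 g hg, hx.2.2 _ (iso_mul hy.1 hg)]
  | inv x _ hx =>
    refine ⟨iso_inv hx.1, ?_, fun g hg => ?_⟩
    · have : x.1.det * (x⁻¹).1.det = 1 := by
        rw [← Matrix.det_mul, x.mul_inv, Matrix.det_one]
      rwa [hx.2.1, one_mul] at this
    · rw [hx.2.2 _ (iso_mul (iso_inv hx.1) hg), ← Matrix.mul_assoc, x.mul_inv, one_mul]


lemma A1_add (m n : ℤ) : A1 m * A1 n = A1 (m + n) := by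
  ext i j
  fin_cases i <;> fin_cases j <;> simp [A1, Matrix.mul_apply, Fin.sum_univ_four] <;> ring

lemma A1_zero : A1 (0 : ℤ) = 1 := by decide

def V1 (n : ℤ) : (Matrix (Fin 4) (Fin 4) ℤ)ˣ where
  val := A1 n
  inv := A1 (-n)
  val_inv := by rw [A1_add, add_neg_cancel, A1_zero]
  inv_val := by rw [A1_add, neg_add_cancel, A1_zero]

lemma V1_mem (n : ℤ) : V1 n ∈ HH := by
  have h1 : V1 1 ∈ HH := by
    refine Subgroup.subset_closure ?_
    have : (V1 1).1 = tMat U2G e2 e1 0 := gen1.symm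
    simp only [Set.mem_ofPred_eq, this]
    tauto
  have hadd : ∀ m n, V1 m * V1 n = V1 (m + n) := fun m n => Units.ext (A1_add m n)
  have hz : V1 0 = 1 := Units.ext A1_zero
  induction n using Int.induction_on with
  | zero => rw [hz]; exact one_mem _
  | succ k ih => rw [← hadd]; exact mul_mem ih h1
  | pred k ih =>
    have : V1 (-k - 1) = V1 (-k) * (V1 1)⁻¹ := by
      rw [eq_mul_inv_iff_mul_eq, hadd]; congr 1; ring
    rw [this]; exact mul_mem ih (inv_mem h1)

lemma V1_act (n : ℤ) (v : Fin 4 → ℤ) :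
    (V1 n).1 *ᵥ v = ![v 0 + n * v 3, v 1, v 2 - n * v 1, v 3] := by
  ext i
  fin_cases i <;> simp [V1, A1, mulVec, dotProduct, Fin.sum_univ_four] <;> ring

lemma A2_add (m n : ℤ) : A2 m * A2 n = A2 (m + n) := by
  ext i j
  fin_cases i <;> fin_cases j <;> simp [A2, Matrix.mul_apply, Fin.sum_univ_four] <;> ring

lemma A2_zero : A2 (0 : ℤ) = 1 := by decide

def V2 (n : ℤ) : (Matrix (Fin 4) (Fin 4) ℤ)ˣ where
  val := A2 n
  inv := A2 (-n)
  val_inv := by rw [A2_add, add_neg_cancel, A2_zero]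
  inv_val := by rw [A2_add, neg_add_cancel, A2_zero]

lemma V2_mem (n : ℤ) : V2 n ∈ HH := by
  have h1 : V2 1 ∈ HH := by
    refine Subgroup.subset_closure ?_
    have : (V2 1).1 = tMat U2G e2 f1 0 := gen2.symm
    simp only [Set.mem_ofPred_eq, this]
    tauto
  have hadd : ∀ m n, V2 m * V2 n = V2 (m + n) := fun m n => Units.ext (A2_add m n)
  have hz : V2 0 = 1 := Units.ext A2_zero
  induction n using Int.induction_on with
  | zero => rw [hz]; exact one_mem _
  | succ k ih => rw [← hadd]; exact mul_mem ih h1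
  | pred k ih =>
    have : V2 (-k - 1) = V2 (-k) * (V2 1)⁻¹ := by
      rw [eq_mul_inv_iff_mul_eq, hadd]; congr 1; ring
    rw [this]; exact mul_mem ih (inv_mem h1)

lemma V2_act (n : ℤ) (v : Fin 4 → ℤ) :
    (V2 n).1 *ᵥ v = ![v 0, v 1 + n * v 3, v 2 - n * v 0, v 3] := by
  ext i
  fin_cases i <;> simp [V2, A2, mulVec, dotProduct, Fin.sum_univ_four] <;> ring

lemma A3_add (m n : ℤ) : A3 m * A3 n = A3 (m + n) := by
  ext i j
  fin_cases i <;> fin_cases j <;> simp [A3, Matrix.mul_apply, Fin.sum_univ_four] <;> ring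

lemma A3_zero : A3 (0 : ℤ) = 1 := by decide

def V3 (n : ℤ) : (Matrix (Fin 4) (Fin 4) ℤ)ˣ where
  val := A3 n
  inv := A3 (-n)
  val_inv := by rw [A3_add, add_neg_cancel, A3_zero]
  inv_val := by rw [A3_add, neg_add_cancel, A3_zero]

lemma V3_mem (n : ℤ) : V3 n ∈ HH := by
  have h1 : V3 1 ∈ HH := by
    refine Subgroup.subset_closure ?_
    have : (V3 1).1 = tMat U2G f2 e1 0 := gen3.symm
    simp only [Set.mem_ofPred_eq, this]
    tauto
  have hadd : ∀ m n, V3 m * V3 n = V3 (m + n) := fun m n => Units.ext (A3_add m n)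
  have hz : V3 0 = 1 := Units.ext A3_zero
  induction n using Int.induction_on with
  | zero => rw [hz]; exact one_mem _
  | succ k ih => rw [← hadd]; exact mul_mem ih h1
  | pred k ih =>
    have : V3 (-k - 1) = V3 (-k) * (V3 1)⁻¹ := by
      rw [eq_mul_inv_iff_mul_eq, hadd]; congr 1; ring
    rw [this]; exact mul_mem ih (inv_mem h1)

lemma V3_act (n : ℤ) (v : Fin 4 → ℤ) :
    (V3 n).1 *ᵥ v = ![v 0 + n * v 2, v 1, v 2, v 3 - n * v 1] := by
  ext i
  fin_cases i <;> simp [V3, A3, mulVec, dotProduct, Fin.sum_univ_four] <;> ring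

lemma A4_add (m n : ℤ) : A4 m * A4 n = A4 (m + n) := by
  ext i j
  fin_cases i <;> fin_cases j <;> simp [A4, Matrix.mul_apply, Fin.sum_univ_four] <;> ring

lemma A4_zero : A4 (0 : ℤ) = 1 := by decide

def V4 (n : ℤ) : (Matrix (Fin 4) (Fin 4) ℤ)ˣ where
  val := A4 n
  inv := A4 (-n)
  val_inv := by rw [A4_add, add_neg_cancel, A4_zero]
  inv_val := by rw [A4_add, neg_add_cancel, A4_zero]

lemma V4_mem (n : ℤ) : V4 n ∈ HH := by
  have h1 : V4 1 ∈ HH := by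
    refine Subgroup.subset_closure ?_
    have : (V4 1).1 = tMat U2G f2 f1 0 := gen4.symm
    simp only [Set.mem_ofPred_eq, this]
    tauto
  have hadd : ∀ m n, V4 m * V4 n = V4 (m + n) := fun m n => Units.ext (A4_add m n)
  have hz : V4 0 = 1 := Units.ext A4_zero
  induction n using Int.induction_on with
  | zero => rw [hz]; exact one_mem _
  | succ k ih => rw [← hadd]; exact mul_mem ih h1
  | pred k ih =>
    have : V4 (-k - 1) = V4 (-k) * (V4 1)⁻¹ := by
      rw [eq_mul_inv_iff_mul_eq, hadd]; congr 1; ring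
    rw [this]; exact mul_mem ih (inv_mem h1)

lemma V4_act (n : ℤ) (v : Fin 4 → ℤ) :
    (V4 n).1 *ᵥ v = ![v 0, v 1 + n * v 2, v 2, v 3 - n * v 0] := by
  ext i
  fin_cases i <;> simp [V4, A4, mulVec, dotProduct, Fin.sum_univ_four] <;> ring

/-- orbit relation -/
def Rl (v w : Fin 4 → ℤ) : Prop := ∃ h ∈ HH, h.1 *ᵥ v = w

lemma Rl.trans {u v w : Fin 4 → ℤ} (h1 : Rl u v) (h2 : Rl v w) : Rl u w := by
  obtain ⟨a, ha, rfl⟩ := h1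
  obtain ⟨b, hb, rfl⟩ := h2
  exact ⟨b * a, mul_mem hb ha, by rw [Units.val_mul, mulVec_mulVec]⟩

lemma r1 (n a b c d : ℤ) : Rl ![a,b,c,d] ![a + n * d, b, c - n * b, d] :=
  ⟨V1 n, V1_mem n, by rw [V1_act]; rfl⟩
lemma r2 (n a b c d : ℤ) : Rl ![a,b,c,d] ![a, b + n * d, c - n * a, d] :=
  ⟨V2 n, V2_mem n, by rw [V2_act]; rfl⟩
lemma r3 (n a b c d : ℤ) : Rl ![a,b,c,d] ![a + n * c, b, c, d - n * b] :=
  ⟨V3 n, V3_mem n, by rw [V3_act]; rfl⟩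
lemma r4 (n a b c d : ℤ) : Rl ![a,b,c,d] ![a, b + n * c, c, d - n * a] :=
  ⟨V4 n, V4_mem n, by rw [V4_act]; rfl⟩

/-- row rotation -/
lemma rot1 (a b c d : ℤ) : Rl ![a,b,c,d] ![d, c, -b, -a] := by
  have := ((r1 1 a b c d).trans (r4 1 _ _ _ _)).trans (r1 1 _ _ _ _)
  convert this using 1
  ext i; fin_cases i <;> simp

/-- column rotation -/
lemma rot2 (a b c d : ℤ) : Rl ![a,b,c,d] ![c, d, -a, -b] := by
  have := ((r3 1 a b c d).trans (r2 1 _ _ _ _)).trans (r3 1 _ _ _ _)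
  convert this using 1
  ext i; fin_cases i <;> simp

lemma reduce : ∀ (N : ℕ) (a b c d : ℤ), a.natAbs = N → a ≠ 0 → a * b + c * d = 0 →
    ∃ x, Rl ![a,b,c,d] ![x,0,0,0] := by
  intro N
  induction N using Nat.strong_induction_on with
  | _ N ih =>
    intro a b c d hN ha hq
    have hlt : ∀ x : ℤ, x % a ≠ 0 → (x % a).natAbs < N := by
      intro x _
      have h1 := Int.emod_nonneg x ha
      have h2 := Int.emod_lt_abs x ha
      have h3 : (|a|).natAbs = a.natAbs := Int.natAbs_abs a
      omega
    by_cases hd : d % a = 0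
    · by_cases hc : c % a = 0
      · obtain ⟨s, rfl⟩ := Int.dvd_of_emod_eq_zero hd
        obtain ⟨t, rfl⟩ := Int.dvd_of_emod_eq_zero hc
        have hb : b + t * (a * s) = 0 := by
          have : a * (b + t * (a * s)) = 0 := by linear_combination hq
          exact (mul_eq_zero.mp this).resolve_left ha
        refine ⟨a, ?_⟩
        have := (r2 t a b (a * t) (a * s)).trans (r4 s _ _ _ _)
        convert this using 1
        ext i; fin_cases i <;> simp <;> linarith
      · have h1 := (r2 (c / a) a b c d).trans (rot2 _ _ _ _)
        have hm : c - c / a * a = c % a := by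
          have := Int.emod_add_mul_ediv c a; linarith
        rw [hm] at h1
        obtain ⟨x, hx⟩ := ih _ (hlt c hc) (c % a) _ _ _ rfl hc
          (by rw [← hm]; linear_combination hq : (c % a) * d + (-a) * (-(b + c / a * d)) = 0)
        exact ⟨x, h1.trans hx⟩
    · have h1 := (r4 (d / a) a b c d).trans (rot1 _ _ _ _)
      have hm : d - d / a * a = d % a := by
        have := Int.emod_add_mul_ediv d a; linarith
      rw [hm] at h1
      obtain ⟨x, hx⟩ := ih _ (hlt d hd) (d % a) _ _ _ rfl hd
        (by rw [← hm]; linear_combination hq : (d % a) * c + (-(b + d / a * c)) * (-a) = 0)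
      exact ⟨x, h1.trans hx⟩

lemma reduce' (a b c d : ℤ) (hne : ¬ (a = 0 ∧ b = 0 ∧ c = 0 ∧ d = 0)) (hq : a * b + c * d = 0) :
    ∃ x, Rl ![a,b,c,d] ![x,0,0,0] := by
  by_cases ha : a = 0
  · by_cases hd : d = 0
    · by_cases hc : c = 0
      · have hb : b ≠ 0 := by tauto
        obtain ⟨x, hx⟩ := reduce _ (-b) (-a) (-d) (-c) rfl (by simpa using hb) (by linear_combination hq)
        refine ⟨x, (((rot1 a b c d).trans (rot2 _ _ _ _)).trans ?_)⟩
        exact hx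
      · obtain ⟨x, hx⟩ := reduce _ c d (-a) (-b) rfl hc (by linear_combination hq)
        exact ⟨x, (rot2 a b c d).trans hx⟩
    · obtain ⟨x, hx⟩ := reduce _ d c (-b) (-a) rfl hd (by linear_combination hq)
      exact ⟨x, (rot1 a b c d).trans hx⟩
  · exact reduce _ a b c d rfl ha hq

/-- integral form -/
def bz (x y : Fin 4 → ℤ) : ℤ := x 0 * y 1 + x 1 * y 0 + x 2 * y 3 + x 3 * y 2

lemma iso_col {g : Matrix (Fin 4) (Fin 4) ℤ} (hg : IsIsometry U2G g) (i j : Fin 4) :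
    g 0 i * g 1 j + g 1 i * g 0 j + g 2 i * g 3 j + g 3 i * g 2 j = U2G i j := by
  rw [← congrFun (congrFun hg i) j]
  simp [U2G, Matrix.mul_apply, Fin.sum_univ_four]
  ring

lemma maxpos : IsMaxPosTuple U2G (![![1,1,0,0], ![0,0,1,1]] : Fin 2 → Fin 4 → ℝ) := by
  constructor
  · refine .of_dotProduct_mulVec_pos (gram_herm _) fun x hx => ?_
    rw [gram_quad, bil_eq]
    simp [Fin.sum_univ_two]
    have : x 0 ≠ 0 ∨ x 1 ≠ 0 := by
      by_contra h
      push Not at h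
      apply hx; ext i; fin_cases i
      · exact h.1
      · exact h.2
    rcases this with h | h
    · nlinarith [mul_self_pos.mpr h, mul_self_nonneg (x 1)]
    · nlinarith [mul_self_pos.mpr h, mul_self_nonneg (x 0)]
  · intro w hw
    let f : (Fin 3 → ℝ) →ₗ[ℝ] (Fin 2 → ℝ) :=
      Matrix.mulVecLin (Matrix.of ![fun i => w i 0 + w i 1, fun i => w i 2 + w i 3])
    have hf : LinearMap.ker f ≠ ⊥ := LinearMap.ker_ne_bot_of_finrank_lt (by simp)
    obtain ⟨x, hx, hx0⟩ := Submodule.exists_mem_ne_zero_of_ne_bot hf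
    have h := hw.dotProduct_mulVec_pos hx0
    rw [gram_quad, bil_eq] at h
    rw [LinearMap.mem_ker] at hx
    have h0 := congrFun hx 0
    have h1 := congrFun hx 1
    simp [f, mulVec, dotProduct, Fin.sum_univ_three] at h0 h1
    simp only [Fin.sum_univ_three, Pi.add_apply, Pi.smul_apply, smul_eq_mul] at h
    set a := x 0 * w 0 0 + x 1 * w 1 0 + x 2 * w 2 0
    set b := x 0 * w 0 1 + x 1 * w 1 1 + x 2 * w 2 1
    set c := x 0 * w 0 2 + x 1 * w 1 2 + x 2 * w 2 2
    set d := x 0 * w 0 3 + x 1 * w 1 3 + x 2 * w 2 3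
    have hb : b = -a := by simp only [a, b]; linarith
    have hd : d = -c := by simp only [c, d]; linarith
    rw [hb, hd] at h
    nlinarith [mul_self_nonneg a, mul_self_nonneg c]

lemma not_orient {g : Matrix (Fin 4) (Fin 4) ℤ}
    (hg : g = !![1,0,0,0;0,1,0,0;0,0,-1,0;0,0,0,-1]) : ¬ OrientPres U2G g := by
  intro h
  have := h 2 _ maxpos
  subst hg
  rw [Matrix.det_fin_two] at this
  simp [bil_eq, mulVec, dotProduct, Fin.sum_univ_four] at this
  linarith

lemma final {g : Matrix (Fin 4) (Fin 4) ℤ} (hg : IsIsometry U2G g) (hdet : g.det = 1)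
    (ho : OrientPres U2G g) (h0 : g 0 0 = 1) (h1 : g 1 0 = 0) (h2 : g 2 0 = 0) (h3 : g 3 0 = 0)
    (k0 : g 0 1 = 0) (k1 : g 1 1 = 1) (k2 : g 2 1 = 0) (k3 : g 3 1 = 0) : g = 1 := by
  have c02 := iso_col hg 0 2
  have c03 := iso_col hg 0 3
  have c12 := iso_col hg 1 2
  have c13 := iso_col hg 1 3
  have c22 := iso_col hg 2 2
  have c33 := iso_col hg 3 3
  have c23 := iso_col hg 2 3
  simp [h0, h1, h2, h3, k0, k1, k2, k3, U2G] at c02 c03 c12 c13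
  simp [c02, c03, c12, c13, U2G] at c22 c33 c23
  have hd : g 2 2 * g 3 3 - g 2 3 * g 3 2 = 1 := by
    rw [← hdet]
    simp [Matrix.det_succ_row_zero, Fin.sum_univ_succ, Fin.succAbove, h0, h1, h2, h3, k0, k1, k2,
      k3, c02, c03, c12, c13]
    ring
  have hps : g 2 2 * g 3 3 = 1 := by linarith
  have hqr : g 3 2 * g 2 3 = 0 := by linarith
  have hr : g 3 2 = 0 := by
    have : g 2 2 * g 3 2 = 0 := by linarith
    rcases mul_eq_zero.mp this with h | h
    · rw [h] at hps; simp at hps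
    · exact h
  have hq : g 2 3 = 0 := by
    have : g 2 3 * g 3 3 = 0 := by linarith
    rcases mul_eq_zero.mp this with h | h
    · exact h
    · rw [h] at hps; simp at hps
  rcases Int.mul_eq_one_iff_eq_one_or_neg_one.mp hps with ⟨hp, hs⟩ | ⟨hp, hs⟩
  · ext i j
    fin_cases i <;> fin_cases j <;> simp [*]
  · exfalso
    refine not_orient ?_ ho
    ext i j
    fin_cases i <;> fin_cases j <;> simp [*]

lemma main_mem {u : (Matrix (Fin 4) (Fin 4) ℤ)ˣ} (hg : IsIsometry U2G u.1) (hdet : u.1.det = 1)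
    (ho : OrientPres U2G u.1) : u ∈ HH := by
  have key : ∀ h ∈ HH, IsIsometry U2G (h * u).1 ∧ (h * u).1.det = 1 ∧ OrientPres U2G (h * u).1 := by
    intro h hh
    have := HH_good hh
    refine ⟨iso_mul this.1 hg, ?_, (this.2.2 _ hg).mp ho⟩
    rw [Units.val_mul, Matrix.det_mul, this.2.1, hdet, one_mul]
  -- first column
  obtain ⟨h, hh, hx⟩ : ∃ h ∈ HH, h.1 *ᵥ (fun i => u.1 i 0) = ![1,0,0,0] := by
    have c00 := iso_col hg 0 0
    have c01 := iso_col hg 0 1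
    simp [U2G] at c00 c01
    have hcol : (fun i => u.1 i 0) = ![u.1 0 0, u.1 1 0, u.1 2 0, u.1 3 0] := by
      ext i; fin_cases i <;> rfl
    obtain ⟨x, h, hh, hx⟩ := reduce' (u.1 0 0) (u.1 1 0) (u.1 2 0) (u.1 3 0)
      (by rintro ⟨p, q, r, s⟩; simp [p, q, r, s] at c01) (by linarith)
    rw [← hcol] at hx
    have hk := (key h hh).1
    have hcol' : ∀ i, (h * u).1 i 0 = ![x,0,0,0] i := fun i => congrFun hx i
    have d01 := iso_col hk 0 1
    simp [hcol', U2G] at d01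
    rcases Int.mul_eq_one_iff_eq_one_or_neg_one.mp d01 with ⟨hp, _⟩ | ⟨hp, _⟩
    · exact ⟨h, hh, by rw [hx, hp]⟩
    · obtain ⟨h', hh', hx'⟩ := (rot1 x 0 0 0).trans (rot1 _ _ _ _)
      refine ⟨h' * h, mul_mem hh' hh, ?_⟩
      rw [Units.val_mul, ← mulVec_mulVec, hx, hx', hp]
      simp
  obtain ⟨hk, _, _⟩ := key h hh
  have hcol : ∀ i, (h * u).1 i 0 = ![1,0,0,0] i := fun i => congrFun hx i
  have d01 := iso_col hk 0 1
  have d11 := iso_col hk 1 1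
  simp only [hcol] at d01
  simp [U2G] at d01 d11
  set G := (h * u).1 with hG
  have hGG : h.1 * u.1 = G := rfl
  rw [hGG] at d01 d11
  set h' := V1 (G 2 1) * V3 (G 3 1) * h with hh'
  have hm : h' ∈ HH := mul_mem (mul_mem (V1_mem _) (V3_mem _)) hh
  obtain ⟨a1, a2, a3⟩ := key h' hm
  have hval : (h' * u).1 = (V1 (G 2 1)).1 * ((V3 (G 3 1)).1 * G) := by
    simp only [hh', Units.val_mul, ← hGG, Matrix.mul_assoc]
  have ent : ∀ i j, (h' * u).1 i j = ((V1 (G 2 1)).1 *ᵥ ((V3 (G 3 1)).1 *ᵥ (fun i => G i j))) i := by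
    intro i j
    rw [hval]; rfl
  simp only [V1_act, V3_act] at ent
  have : (h' * u).1 = 1 := by
    apply final a1 a2 a3 <;> rw [ent] <;> simp [hcol, d01]
    rw [d01] at d11
    linarith
  have h1 : h' * u = 1 := Units.ext this
  rw [eq_inv_of_mul_eq_one_right h1]
  exact inv_mem hm

/-- `SO⁺(U²)` is generated by the four Eichler transvections
`t(e₂,e₁)`, `t(e₂,f₁)`, `t(f₂,e₁)` and `t(f₂,f₁)`.
The ambient group `(Matrix (Fin 4) (Fin 4) ℤ)ˣ` is `GL(U²)`. -/
theorem stmt_4 :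
    (Subgroup.closure
        {g : (Matrix (Fin 4) (Fin 4) ℤ)ˣ |
          (g : Matrix (Fin 4) (Fin 4) ℤ) = tMat U2G e2 e1 0 ∨
          (g : Matrix (Fin 4) (Fin 4) ℤ) = tMat U2G e2 f1 0 ∨
          (g : Matrix (Fin 4) (Fin 4) ℤ) = tMat U2G f2 e1 0 ∨
          (g : Matrix (Fin 4) (Fin 4) ℤ) = tMat U2G f2 f1 0} :
      Set ((Matrix (Fin 4) (Fin 4) ℤ)ˣ)) =
    {g : (Matrix (Fin 4) (Fin 4) ℤ)ˣ |
      IsIsometry U2G (g : Matrix (Fin 4) (Fin 4) ℤ) ∧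
        (g : Matrix (Fin 4) (Fin 4) ℤ).det = 1 ∧
        OrientPres U2G (g : Matrix (Fin 4) (Fin 4) ℤ)} := by
  ext u
  constructor
  · intro hu
    have := HH_good (u := u) hu
    refine ⟨this.1, this.2.1, ?_⟩
    have h1 := (this.2.2 1 (by unfold IsIsometry; simp)).mp orient_one
    rwa [mul_one] at h1
  · rintro ⟨h1, h2, h3⟩
    exact main_mem h1 h2 h3
end

section
/- Let {e₁, f₁} be a standard basis of a fixed copy U₁ of the hyperbolic plane inside U³ = U₁ ⊕ U ⊕ U. For every integer d ≥ 1, the group SO^+(U³) is generated by the union of the four stabilizer subgroups SO^+_{e₁+df₁}(U³) ∪ SO^+_{de₁+f₁}(U³) ∪ SO^+_{e₁+(d+1)f₁}(U³) ∪ SO^+_{(d+1)e₁+f₁}(U³). -/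
open Matrix

/-- The Gram matrix of `U³` in the standard basis `e₁, f₁, e₂, f₂, e₃, f₃`. -/
def U3G : Matrix (Fin 6) (Fin 6) ℤ :=
  !![0,1,0,0,0,0;
     1,0,0,0,0,0;
     0,0,0,1,0,0;
     0,0,1,0,0,0;
     0,0,0,0,0,1;
     0,0,0,0,1,0]

/-- The stabilizer of a vector `v` inside `SO⁺(U³)`, as a subset of
`GL(U³) = (Matrix (Fin 6) (Fin 6) ℤ)ˣ`. -/
def SOplusStab (v : Fin 6 → ℤ) : Set ((Matrix (Fin 6) (Fin 6) ℤ)ˣ) :=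
  {g | IsIsometry U3G (g : Matrix (Fin 6) (Fin 6) ℤ) ∧
    (g : Matrix (Fin 6) (Fin 6) ℤ).det = 1 ∧
    OrientPres U3G (g : Matrix (Fin 6) (Fin 6) ℤ) ∧
    (g : Matrix (Fin 6) (Fin 6) ℤ) *ᵥ v = v}


namespace Aux

section real
variable {V : Type*} [AddCommGroup V] [Module ℝ V] (B : LinearMap.BilinForm ℝ V)

def comb {k : ℕ} (w : Fin k → V) (c : Fin k → ℝ) : V := ∑ i, c i • w i

def Pos {k : ℕ} (w : Fin k → V) : Prop := ∀ c : Fin k → ℝ, c ≠ 0 → 0 < B (comb w c) (comb w c)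

def cm {k : ℕ} (w w' : Fin k → V) : Matrix (Fin k) (Fin k) ℝ := Matrix.of fun i j => B (w i) (w' j)

lemma quad_eq {k : ℕ} (w w' : Fin k → V) (c c' : Fin k → ℝ) :
    B (comb w c) (comb w' c') = c ⬝ᵥ (cm B w w' *ᵥ c') := by
  simp only [comb, map_sum, LinearMap.sum_apply, map_smul, LinearMap.smul_apply, dotProduct,
    mulVec, cm, Matrix.of_apply, smul_eq_mul, Finset.mul_sum]
  rw [Finset.sum_comm]
  refine Finset.sum_congr rfl fun i _ => Finset.sum_congr rfl fun j _ => by ring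

lemma posDef_iff (hB : ∀ x y, B x y = B y x) {k : ℕ} (w : Fin k → V) :
    (cm B w w).PosDef ↔ Pos B w := by
  constructor
  · intro h c hc
    rw [quad_eq]
    simpa using h.dotProduct_mulVec_pos hc
  · intro h
    refine Matrix.PosDef.of_dotProduct_mulVec_pos ?_ ?_
    · ext i j
      simp [cm, hB (w j)]
    · intro c hc
      have := h c hc
      rw [quad_eq] at this
      simpa using this

/-- maximal positive -/
def MP {k : ℕ} (w : Fin k → V) : Prop := Pos B w ∧ ∀ w' : Fin (k+1) → V, ¬ Pos B w'

lemma neg_of_orth (hB : ∀ x y, B x y = B y x) {k : ℕ} {w : Fin k → V} (hw : MP B w) (u : V)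
    (hu : ∀ i, B (w i) u = 0) : B u u ≤ 0 := by
  by_contra! hpos
  apply hw.2 (Fin.cons u w)
  intro c hc
  have h1 : comb (Fin.cons u w : Fin (k+1) → V) c = c 0 • u + comb w (fun i => c i.succ) := by
    simp [comb, Fin.sum_univ_succ]
  set x := comb w (fun i => c i.succ) with hx
  have h2 : B x u = 0 := by
    simp [hx, comb, hu]
  rw [h1]
  have h3 : B (c 0 • u + x) (c 0 • u + x) = c 0 ^2 * B u u + B x x := by
    simp only [map_add, map_smul, LinearMap.add_apply, LinearMap.smul_apply, smul_eq_mul, h2, hB u x]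
    ring
  rw [h3]
  by_cases h : (fun i : Fin k => c i.succ) = 0
  · have : c 0 ≠ 0 := by
      intro h0
      apply hc
      funext i
      refine Fin.cases h0 (fun i => congrFun h i) i
    have hx0 : x = 0 := by rw [hx, h]; simp [comb]
    rw [hx0]
    simp
    positivity
  · have := hw.1 _ h
    rw [← hx] at this
    positivity

lemma det_ne (hB : ∀ x y, B x y = B y x) {k : ℕ} {w w' : Fin k → V} (hw : MP B w)
    (hw' : Pos B w') : (cm B w w').det ≠ 0 := by
  intro h
  obtain ⟨c, hc, hc0⟩ := Matrix.exists_mulVec_eq_zero_iff.mpr h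
  have h1 := hw' c hc
  have h2 := neg_of_orth B hB hw (comb w' c) (fun i => by
    have := congrFun hc0 i
    simp only [mulVec, dotProduct, cm, Matrix.of_apply, Pi.zero_apply] at this
    rw [← this]
    simp [comb, mul_comm])
  linarith

lemma cm_det_pos (hB : ∀ x y, B x y = B y x) {k : ℕ} {w : Fin k → V} (hw : Pos B w) :
    0 < (cm B w w).det := ((posDef_iff B hB w).2 hw).det_pos

/-- positivity along a path -/
lemma path_pos (hB : ∀ x y, B x y = B y x) {k : ℕ} {w : Fin k → V} (hw : MP B w)
    (p : ℝ → Fin k → V) (hp : ∀ t ∈ Set.Icc (0:ℝ) 1, Pos B (p t))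
    (hc : ∀ i j, Continuous fun t => B (w i) (p t j))
    (h0 : 0 < (cm B w (p 0)).det) : 0 < (cm B w (p 1)).det := by
  by_contra! h1
  have hcont : Continuous fun t => (cm B w (p t)).det := by
    apply Continuous.matrix_det
    exact continuous_matrix hc
  obtain ⟨t, ht, h⟩ := intermediate_value_Icc' (zero_le_one' ℝ) hcont.continuousOn ⟨h1, h0.le⟩
  exact det_ne B hB hw (hp t ht) h

lemma det_trans (hB : ∀ x y, B x y = B y x) {k : ℕ} {w w' w'' : Fin k → V} (hw : MP B w)
    (hw' : MP B w') (hw'' : MP B w'') (h1 : 0 < (cm B w w').det) (h2 : 0 < (cm B w' w'').det) :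
    0 < (cm B w w'').det := by
  have hG := cm_det_pos B hB hw'.1
  set G := cm B w' w' with hGdef
  set C := G⁻¹ * cm B w' w'' with hC
  have hGC : G * C = cm B w' w'' := by
    rw [hC, ← Matrix.mul_assoc, Matrix.mul_nonsing_inv _ (isUnit_iff_ne_zero.2 hG.ne'), one_mul]
  have hdC : 0 < C.det := by
    have : G.det * C.det = (cm B w' w'').det := by rw [← Matrix.det_mul, hGC]
    rw [← this] at h2
    exact (pos_iff_pos_of_mul_pos h2).1 hG
  let P : Fin k → V := fun j => ∑ l, C l j • w' l
  let N : Fin k → V := fun j => w'' j - P j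
  have hN : ∀ i j, B (w' i) (N j) = 0 := by
    intro i j
    have := congrFun (congrFun hGC i) j
    simp only [Matrix.mul_apply, hGdef, cm, Matrix.of_apply] at this
    simp only [N, P, map_sub, map_sum, map_smul, smul_eq_mul, ← this]
    rw [sub_eq_zero]
    exact Finset.sum_congr rfl fun l _ => mul_comm _ _
  have hcm : ∀ x : Fin k → V, cm B x P = cm B x w' * C := by
    intro x
    ext i j
    simp [cm, P, Matrix.mul_apply, mul_comm]
  have key := path_pos B hB hw (fun t j => P j + t • N j) (by
    intro t ht c hc
    have e : ∀ t : ℝ, comb (fun j => P j + t • N j) c = comb P c + t • comb N c := by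
      intro t
      simp [comb, Finset.sum_add_distrib, Finset.smul_sum, smul_comm t]
    have o : B (comb P c) (comb N c) = 0 := by
      simp [comb, P, hN]
    have q : ∀ t : ℝ, B (comb P c + t • comb N c) (comb P c + t • comb N c)
        = B (comb P c) (comb P c) + t^2 * B (comb N c) (comb N c) := by
      intro t
      simp only [map_add, map_smul, LinearMap.add_apply, LinearMap.smul_apply, smul_eq_mul, o,
        hB (comb N c) (comb P c)]
      ring
    have n : B (comb N c) (comb N c) ≤ 0 := by
      apply neg_of_orth B hB hw'
      intro i
      simp [comb, hN]
    have pos := hw''.1 c hc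
    have e1 : comb w'' c = comb P c + (1:ℝ) • comb N c := by
      rw [← e 1]; simp [N]
    rw [e1, q] at pos
    simp only [e, q]
    have : t^2 ≤ 1 := by nlinarith [ht.1, ht.2]
    nlinarith) (by
      intro i j
      simp only [map_add, map_smul, smul_eq_mul]
      fun_prop) (by
      have : cm B w (fun j => P j + (0:ℝ) • N j) = cm B w P := by simp
      rw [this, hcm, Matrix.det_mul]
      positivity)
  simpa [N] using key

lemma det_symm (hB : ∀ x y, B x y = B y x) {k : ℕ} (w w' : Fin k → V) :
    (cm B w w').det = (cm B w' w).det := by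
  rw [← Matrix.det_transpose]
  congr 1
  ext i j
  simp [cm, hB (w j)]

end real

section mat

noncomputable def BM : LinearMap.BilinForm ℝ (Fin 6 → ℝ) := Matrix.toBilin' (U3G.map (Int.cast : ℤ → ℝ))

lemma BM_eq (x y) : BM x y = bilinR U3G x y := by
  simp [BM, bilinR, Matrix.toBilin'_apply']

lemma BM_exp (x y) : BM x y = x 0 * y 1 + x 1 * y 0 + x 2 * y 3 + x 3 * y 2 + x 4 * y 5 + x 5 * y 4 := by
  rw [BM_eq]
  simp [bilinR, U3G, dotProduct, mulVec, Fin.sum_univ_succ]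
  ring

lemma BM_symm (x y) : BM x y = BM y x := by
  rw [BM_exp, BM_exp]; ring

lemma maxPos_iff {k : ℕ} (w : Fin k → Fin 6 → ℝ) : IsMaxPosTuple U3G w ↔ MP BM w := by
  unfold IsMaxPosTuple MP
  simp only [← BM_eq, ← posDef_iff BM BM_symm]
  rfl

/-- real version of an integer matrix -/
noncomputable def rl (g : Matrix (Fin 6) (Fin 6) ℤ) : Matrix (Fin 6) (Fin 6) ℝ := g.map (Int.cast : ℤ → ℝ)

def RIso (g : Matrix (Fin 6) (Fin 6) ℝ) : Prop := gᵀ * U3G.map (Int.cast : ℤ → ℝ) * g = U3G.map (Int.cast : ℤ → ℝ)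

lemma rl_mul (g h) : rl (g * h) = rl g * rl h := by
  unfold rl
  exact Matrix.map_mul (f := Int.castRingHom ℝ)

lemma rl_iso {g} (h : IsIsometry U3G g) : RIso (rl g) := by
  have := congrArg rl h
  rw [rl_mul, rl_mul] at this
  exact this

lemma RIso.BM {g} (h : RIso g) (x y) : BM (g *ᵥ x) (g *ᵥ y) = Aux.BM x y := by
  simp only [BM_eq, bilinR]
  conv_rhs => rw [← h]
  rw [← Matrix.mulVec_mulVec, ← Matrix.mulVec_mulVec, Matrix.dotProduct_mulVec x, Matrix.vecMul_transpose]

lemma comb_mulVec {k : ℕ} (g : Matrix (Fin 6) (Fin 6) ℝ) (w : Fin k → Fin 6 → ℝ) (c) :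
    comb (fun j => g *ᵥ w j) c = g *ᵥ comb w c := by
  simp [comb, Matrix.mulVec_sum, Matrix.mulVec_smul]

lemma RIso.MP {g} (h : RIso g) {k : ℕ} {w : Fin k → Fin 6 → ℝ} (hw : MP Aux.BM w) :
    MP Aux.BM (fun j => g *ᵥ w j) := by
  refine ⟨fun c hc => ?_, hw.2⟩
  rw [comb_mulVec, h.BM]
  exact hw.1 c hc

lemma orient_iff (g) : OrientPres U3G g ↔
    ∀ (k : ℕ) (w : Fin k → Fin 6 → ℝ), MP BM w → 0 < (cm BM w (fun j => rl g *ᵥ w j)).det := by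
  unfold OrientPres
  simp only [maxPos_iff, ← BM_eq]
  rfl

def Good (g : Matrix (Fin 6) (Fin 6) ℤ) : Prop := IsIsometry U3G g ∧ g.det = 1 ∧ OrientPres U3G g

lemma good_one : Good 1 := by
  refine ⟨by simp [IsIsometry], by simp, ?_⟩
  rw [orient_iff]
  intro k w hw
  have : rl 1 = 1 := by simp [rl]
  simpa [this] using cm_det_pos BM BM_symm hw.1

lemma good_mul {g h} (hg : Good g) (hh : Good h) : Good (g * h) := by
  refine ⟨?_, by simp [hg.2.1, hh.2.1], ?_⟩
  · have h1 := hg.1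
    have h2 := hh.1
    unfold IsIsometry at *
    calc (g * h)ᵀ * U3G * (g * h) = hᵀ * (gᵀ * U3G * g) * h := by
          rw [Matrix.transpose_mul]; simp only [Matrix.mul_assoc]
      _ = U3G := by rw [h1, h2]
  · rw [orient_iff]
    intro k w hw
    have ih := rl_iso hh.1
    have ig := rl_iso hg.1
    have h1 := (orient_iff h).1 hh.2.2 k w hw
    have h2 := (orient_iff g).1 hg.2.2 k _ (ih.MP hw)
    have := det_trans BM BM_symm hw (ih.MP hw) (ig.MP (ih.MP hw)) h1 h2
    simpa [rl_mul] using this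

lemma good_inv {g h : Matrix (Fin 6) (Fin 6) ℤ} (hg : Good g) (e : g * h = 1) : Good h := by
  have i : IsIsometry U3G h := by
    have h1 := hg.1
    unfold IsIsometry at *
    conv_lhs => rw [← h1]
    calc hᵀ * (gᵀ * U3G * g) * h = (g * h)ᵀ * U3G * (g * h) := by
          rw [Matrix.transpose_mul]; simp only [Matrix.mul_assoc]
      _ = U3G := by rw [e]; simp
  refine ⟨i, ?_, ?_⟩
  · have := congrArg Matrix.det e
    simpa [hg.2.1] using this
  · rw [orient_iff]
    intro k w hw
    have h2 := (orient_iff g).1 hg.2.2 k _ ((rl_iso i).MP hw)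
    rw [det_symm BM BM_symm]
    have : rl g * rl h = 1 := by rw [← rl_mul, e]; simp [rl]
    simpa [this] using h2

def SO : Subgroup ((Matrix (Fin 6) (Fin 6) ℤ)ˣ) where
  carrier := {g | Good g}
  one_mem' := good_one
  mul_mem' := fun a b => good_mul a b
  inv_mem' := fun {g} a => good_inv a (by simp)

/-- the standard maximal positive tuple -/
def w0 : Fin 3 → Fin 6 → ℝ := ![![1,1,0,0,0,0], ![0,0,1,1,0,0], ![0,0,0,0,1,1]]

lemma w0_max : MP BM w0 := by
  constructor
  · intro c hc
    have : BM (comb w0 c) (comb w0 c) = 2 * (c 0 ^2 + c 1 ^2 + c 2 ^2) := by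
      rw [BM_exp]
      simp [comb, w0, Fin.sum_univ_succ]
      ring
    rw [this]
    by_contra! h
    apply hc
    funext i
    have h0 : c 0 = 0 := by nlinarith [sq_nonneg (c 0), sq_nonneg (c 1), sq_nonneg (c 2)]
    have h1 : c 1 = 0 := by nlinarith [sq_nonneg (c 0), sq_nonneg (c 1), sq_nonneg (c 2)]
    have h2 : c 2 = 0 := by nlinarith [sq_nonneg (c 0), sq_nonneg (c 1), sq_nonneg (c 2)]
    fin_cases i <;> simp [h0, h1, h2]
  · intro w' h
    let L : (Fin 4 → ℝ) →ₗ[ℝ] (Fin 3 → ℝ) :=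
      Matrix.toLin' (Matrix.of fun i j => BM (w0 i) (w' j))
    obtain ⟨c, hc, hc0⟩ := Submodule.exists_mem_ne_zero_of_ne_bot
      (LinearMap.ker_ne_bot_of_finrank_lt (f := L) (by simp))
    have hp := h c hc0
    have ho : ∀ i, BM (w0 i) (comb w' c) = 0 := by
      intro i
      have := congrFun (LinearMap.mem_ker.1 hc) i
      simp only [L, Matrix.toLin'_apply, mulVec, dotProduct, Matrix.of_apply, Pi.zero_apply] at this
      rw [← this]
      simp [comb, mul_comm]
    have a0 := ho 0
    have a1 := ho 1
    have a2 := ho 2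
    rw [BM_exp] at a0 a1 a2 hp
    simp [w0] at a0 a1 a2
    set u := comb w' c
    have b0 : u 1 = - u 0 := by linarith
    have b1 : u 3 = - u 2 := by linarith
    have b2 : u 5 = - u 4 := by linarith
    rw [b0, b1, b2] at hp
    nlinarith [sq_nonneg (u 0), sq_nonneg (u 2), sq_nonneg (u 4)]

end mat

section alg

abbrev GU := (Matrix (Fin 6) (Fin 6) ℤ)ˣ

def sg : Fin 6 → Fin 6 := ![1,0,3,2,5,4]

def NZ (p q : Fin 6) : Matrix (Fin 6) (Fin 6) ℤ := Matrix.single p (sg q) 1 - Matrix.single q (sg p) 1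

abbrev Val (p q : Fin 6) : Prop := q ≠ p ∧ q ≠ sg p

lemma NZ_sq : ∀ p q, Val p q → NZ p q * NZ p q = 0 := by
  decide +kernel

lemma NZ_anti : ∀ p q, (NZ p q)ᵀ * U3G + U3G * NZ p q = 0 := by
  decide +kernel

lemma NZ_tri : ∀ p q, Val p q → (NZ p q)ᵀ * U3G * NZ p q = 0 := by
  decide +kernel

def T (p q : Fin 6) (n : ℤ) : Matrix (Fin 6) (Fin 6) ℤ := 1 + n • NZ p q

noncomputable def TR (p q : Fin 6) (n : ℝ) : Matrix (Fin 6) (Fin 6) ℝ := 1 + n • rl (NZ p q)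

lemma rl_T (p q n) : rl (T p q n) = TR p q n := by
  ext i j
  simp only [rl, T, TR, Matrix.map_apply, Matrix.add_apply, Matrix.smul_apply, Matrix.one_apply, smul_eq_mul]
  push_cast
  rfl

lemma rl_add (g h) : rl (g + h) = rl g + rl h := by
  ext i j; simp [rl]

lemma TR_iso (p q n) (h : Val p q) : RIso (TR p q n) := by
  have h1 := congrArg rl (NZ_anti p q)
  have h2 := congrArg rl (NZ_tri p q h)
  rw [rl_add, rl_mul, rl_mul] at h1
  rw [rl_mul, rl_mul] at h2
  have z : rl 0 = 0 := by ext i j; simp [rl]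
  have t : rl (NZ p q)ᵀ = (rl (NZ p q))ᵀ := rfl
  rw [z, t] at h1 h2
  unfold RIso TR
  change _ * rl U3G * _ = rl U3G
  set N := rl (NZ p q)
  set G := rl U3G
  have : (1 + n • N)ᵀ * G * (1 + n • N) = G + n • (Nᵀ * G + G * N) + (n * n) • (Nᵀ * G * N) := by
    rw [Matrix.transpose_add, Matrix.transpose_smul, Matrix.transpose_one]
    simp only [add_mul, mul_add, one_mul, mul_one, smul_mul_assoc, mul_smul_comm, smul_add, smul_smul]
    abel
  rw [this, h1, h2]; simp

lemma T_iso (p q n) (h : Val p q) : IsIsometry U3G (T p q n) := by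
  have h1 := NZ_anti p q
  have h2 := NZ_tri p q h
  unfold IsIsometry T
  set N := NZ p q
  set G := U3G
  have : (1 + n • N)ᵀ * G * (1 + n • N) = G + n • (Nᵀ * G + G * N) + (n * n) • (Nᵀ * G * N) := by
    rw [Matrix.transpose_add, Matrix.transpose_smul, Matrix.transpose_one]
    simp only [add_mul, mul_add, one_mul, mul_one, smul_mul_assoc, mul_smul_comm, smul_add, smul_smul]
    abel
  rw [this, h1, h2]; simp

lemma T_add (p q m n) (h : Val p q) : T p q m * T p q n = T p q (m + n) := by
  unfold T
  simp only [add_mul, mul_add, one_mul, mul_one, smul_mul_assoc, mul_smul_comm, NZ_sq p q h, smul_zero, add_smul]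
  abel

lemma T_zero (p q) : T p q 0 = 1 := by simp [T]

lemma sg_ne : ∀ p q, Val p q → p ≠ sg q ∧ q ≠ sg p ∧ sg q ≠ q := by decide

lemma T_det (p q n) (h : Val p q) : (T p q n).det = 1 := by
  have : T p q n = Matrix.transvection p (sg q) n * Matrix.transvection q (sg p) (-n) := by
    unfold Matrix.transvection T NZ
    have : Matrix.single p (sg q) n * Matrix.single q (sg p) (-n) = 0 :=
      Matrix.single_mul_single_of_ne _ _ _ _ (sg_ne p q h).2.2 _
    simp only [add_mul, mul_add, one_mul, mul_one, this, add_zero]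
    ext i j
    simp only [Matrix.single_apply, Matrix.add_apply, Matrix.smul_apply, Matrix.sub_apply, smul_eq_mul]
    split_ifs <;> ring
  rw [this, Matrix.det_mul, Matrix.det_transvection_of_ne _ _ (sg_ne p q h).1,
    Matrix.det_transvection_of_ne _ _ (sg_ne p q h).2.1, one_mul]

lemma T_good (p q n) (h : Val p q) : Good (T p q n) := by
  refine ⟨T_iso p q n h, T_det p q n h, ?_⟩
  rw [orient_iff]
  intro k w hw
  rw [rl_T]
  have := path_pos BM BM_symm hw (fun t j => TR p q (t * n) *ᵥ w j)
    (fun t _ => ((TR_iso p q (t * n) h).MP hw).1) (by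
      intro i j
      simp only [TR, Matrix.add_mulVec, Matrix.smul_mulVec, map_add, map_smul, smul_eq_mul]
      fun_prop) (by simpa [TR] using cm_det_pos BM BM_symm hw.1)
  simpa using this

def TU (p q : Fin 6) (h : Val p q) (n : ℤ) : GU where
  val := T p q n
  inv := T p q (-n)
  val_inv := by rw [T_add _ _ _ _ h]; simp [T_zero]
  inv_val := by rw [T_add _ _ _ _ h]; simp [T_zero]

lemma TU_SO (p q h n) : TU p q h n ∈ SO := T_good p q n h

lemma TU_add (p q h m n) : TU p q h m * TU p q h n = TU p q h (m + n) := Units.ext (T_add p q m n h)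

lemma TU_zpow (p q h) (n : ℤ) : TU p q h 1 ^ n = TU p q h n := by
  induction n using Int.induction_on with
  | zero => exact Units.ext (T_zero p q).symm
  | succ i ih => rw [_root_.zpow_add_one, ih, TU_add]
  | pred i ih =>
    rw [_root_.zpow_sub_one, ih, mul_inv_eq_iff_eq_mul, TU_add]
    simp

lemma T_mulVec (p q n) (v : Fin 6 → ℤ) (i) : (T p q n *ᵥ v) i =
    v i + n * ((if i = p then v (sg q) else 0) - (if i = q then v (sg p) else 0)) := by
  have aux : ∀ a b : Fin 6, (Matrix.single a b (1:ℤ) *ᵥ v) i = if i = a then v b else 0 := by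
    intro a b
    simp [mulVec, dotProduct, Matrix.single_apply, ite_and, eq_comm]
  simp only [T, NZ, Matrix.add_mulVec, Matrix.smul_mulVec, Matrix.sub_mulVec, Matrix.one_mulVec,
    Pi.add_apply, Pi.smul_apply, Pi.sub_apply, aux, smul_eq_mul]

lemma TU_symm : ∀ p q, Val p q → Val q p := by decide

lemma NZ_symm (p q) : NZ q p = - NZ p q := by simp [NZ]

lemma TU_swap (p q h h' n) : TU p q h n = TU q p h' (-n) := by
  apply Units.ext
  change T p q n = T q p (-n)
  rw [T, T, NZ_symm p q]
  simp

def Fx (v : Fin 6 → ℤ) : Subgroup GU where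
  carrier := {g | (g : Matrix (Fin 6) (Fin 6) ℤ) *ᵥ v = v}
  one_mem' := by simp
  mul_mem' := by
    intro a b ha hb
    simp only [Set.mem_ofPred_eq] at *
    rw [Units.val_mul, ← Matrix.mulVec_mulVec, hb, ha]
  inv_mem' := by
    intro a ha
    simp only [Set.mem_ofPred_eq] at *
    conv_lhs => rw [← ha]
    simp

lemma mem_Fx (v) (g : GU) : g ∈ Fx v ↔ (g : Matrix (Fin 6) (Fin 6) ℤ) *ᵥ v = v := Iff.rfl

lemma stab_eq (v) : SOplusStab v = (SO ⊓ Fx v : Subgroup GU) := by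
  ext g
  simp only [SOplusStab, Set.mem_ofPred_eq, SetLike.mem_coe, Subgroup.mem_inf, mem_Fx]
  change _ ↔ Good _ ∧ _
  unfold Good
  tauto

lemma TU_val (p q h n) : ((TU p q h n : GU) : Matrix (Fin 6) (Fin 6) ℤ) = T p q n := rfl

/-- key: the elementary elements lie in the generated subgroup -/
lemma elem_mem (d : ℤ) (H : Subgroup GU) (h1 : SO ⊓ Fx ![1, d, 0, 0, 0, 0] ≤ H)
    (h2 : SO ⊓ Fx ![d, 1, 0, 0, 0, 0] ≤ H) (h3 : SO ⊓ Fx ![1, d+1, 0, 0, 0, 0] ≤ H)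
    (h4 : SO ⊓ Fx ![d+1, 1, 0, 0, 0, 0] ≤ H) : ∀ p q h n, TU p q h n ∈ H := by
  have key : ∀ q : Fin 6, ∀ (a : Val q 0) (b : Val q 1),
      TU q 0 a 1 ∈ H ∧ TU q 1 b 1 ∈ H := by
    intro q a b
    have A : ∀ s t x y : ℤ, s * y + t * x = 0 →
        TU q 0 a s * TU q 1 b t ∈ SO ⊓ Fx ![x, y, 0, 0, 0, 0] := by
      intro s t x y e
      refine ⟨SO.mul_mem (TU_SO _ _ _ _) (TU_SO _ _ _ _), ?_⟩
      change _ *ᵥ _ = _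
      rw [Units.val_mul, ← Matrix.mulVec_mulVec, TU_val, TU_val]
      funext i
      rw [T_mulVec, T_mulVec, T_mulVec, T_mulVec]
      fin_cases q <;> simp [sg, Val] at a b <;> fin_cases i <;> simp [sg] <;> linarith
    have B1 := h1 (A 1 (-d) 1 d (by ring))
    have B2 := h3 (A 1 (-(d+1)) 1 (d+1) (by ring))
    have B3 := h2 (A (-d) 1 (d) 1 (by ring))
    have B4 := h4 (A (-(d+1)) 1 (d+1) 1 (by ring))
    constructor
    · have := H.mul_mem B3 (H.inv_mem B4)
      have e : TU q 0 a (-d) * TU q 1 b 1 * (TU q 0 a (-(d+1)) * TU q 1 b 1)⁻¹ = TU q 0 a 1 := by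
        rw [_root_.mul_inv_rev, ← TU_zpow q 0 a (-d), ← TU_zpow q 0 a (-(d+1))]
        group
      rwa [e] at this
    · have := H.mul_mem (H.inv_mem B2) B1
      have e : (TU q 0 a 1 * TU q 1 b (-(d+1)))⁻¹ * (TU q 0 a 1 * TU q 1 b (-d)) = TU q 1 b 1 := by
        rw [_root_.mul_inv_rev, ← TU_zpow q 1 b (-d), ← TU_zpow q 1 b (-(d+1))]
        group
      rwa [e] at this
  have val0 : ∀ q, Val q 0 ↔ Val q 1 := by decide
  have k0 : ∀ q (a : Val q 0) n, TU q 0 a n ∈ H := fun q a n => by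
    rw [← TU_zpow]; exact H.zpow_mem (key q a ((val0 q).1 a)).1 n
  have k1 : ∀ q (a : Val q 1) n, TU q 1 a n ∈ H := fun q a n => by
    rw [← TU_zpow]; exact H.zpow_mem (key q ((val0 q).2 a) a).2 n
  intro p q h n
  by_cases q0 : q = 0
  · subst q0; exact k0 p h n
  by_cases q1 : q = 1
  · subst q1; exact k1 p h n
  by_cases p0 : p = 0
  · subst p0; rw [TU_swap _ _ _ (TU_symm _ _ h)]; exact k0 _ _ _
  by_cases p1 : p = 1
  · subst p1; rw [TU_swap _ _ _ (TU_symm _ _ h)]; exact k1 _ _ _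
  refine h1 ⟨TU_SO _ _ _ _, ?_⟩
  change T p q n *ᵥ _ = _
  funext i
  rw [T_mulVec]
  clear key k0 k1 h1 h2 h3 h4
  have z : ∀ q : Fin 6, q ≠ 0 → q ≠ 1 → (![1, d, 0, 0, 0, 0] : Fin 6 → ℤ) (sg q) = 0 := by
    intro q h h'
    fin_cases q <;> simp [sg] at h h' ⊢
  rw [z p p0 p1, z q q0 q1]
  simp

end alg

section red

lemma smith (P : ℤ → ℤ → ℤ → ℤ → Prop)
    (h1 : ∀ n a b c d, P (a + n * d) b (c - n * b) d → P a b c d)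
    (h2 : ∀ n a b c d, P (a + n * c) b c (d - n * b) → P a b c d)
    (h3 : ∀ n a b c d, P a (b + n * d) (c - n * a) d → P a b c d)
    (h4 : ∀ n a b c d, P a (b + n * c) c (d - n * a) → P a b c d)
    (h0 : ∀ a b, P a b 0 0) : ∀ a b c d, P a b c d := by
  have sw1 : ∀ a b c d, P d c (-b) (-a) → P a b c d := by
    intro a b c d h
    apply h1 1; apply h4 1; apply h1 1
    convert h using 1 <;> ring
  have sw2 : ∀ a b c d, P c d (-a) (-b) → P a b c d := by
    intro a b c d h
    apply h2 1; apply h3 1; apply h2 1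
    convert h using 1 <;> ring
  have main : ∀ m : ℕ, ∀ a b c d, a ≠ 0 → a.natAbs = m → P a b c d := by
    intro m
    induction m using Nat.strong_induction_on with
    | _ m ih =>
      intro a b c d ha hm
      apply h4 (d / a)
      have e : d - d / a * a = d % a := by rw [Int.emod_def]; ring
      rw [e]
      generalize b + d / a * c = b
      have l1 := Int.emod_nonneg d ha
      have l2 := Int.emod_lt d ha
      generalize d % a = r at l1 l2
      by_cases hr : r = 0
      · subst hr
        apply h3 (c / a)
        have e : c - c / a * a = c % a := by rw [Int.emod_def]; ring
        rw [e]
        simp only [mul_zero, add_zero]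
        have l1 := Int.emod_nonneg c ha
        have l2 := Int.emod_lt c ha
        generalize c % a = r at l1 l2
        by_cases hr : r = 0
        · subst hr; exact h0 _ _
        · apply sw2
          exact ih r.natAbs (by omega) _ _ _ _ hr rfl
      · apply sw1
        exact ih r.natAbs (by omega) _ _ _ _ hr rfl
  intro a b c d
  by_cases ha : a = 0
  · by_cases hd : d = 0
    · by_cases hc : c = 0
      · subst hc hd; exact h0 _ _
      · apply sw2; exact main _ _ _ _ _ hc rfl
    · apply sw1; exact main _ _ _ _ _ hd rfl
  · exact main _ _ _ _ _ ha rfl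

lemma unitize (P : ℤ → ℤ → ℤ → ℤ → Prop)
    (h1 : ∀ n a b c d, P (a + n * d) b (c - n * b) d → P a b c d)
    (h2 : ∀ n a b c d, P (a + n * c) b c (d - n * b) → P a b c d)
    (h3 : ∀ n a b c d, P a (b + n * d) (c - n * a) d → P a b c d)
    (h4 : ∀ n a b c d, P a (b + n * c) c (d - n * a) → P a b c d)
    (h0 : P 1 0 0 0) (a b x y : ℤ) (hab : a * b = 0) (hu : a * x + b * y = 1) : P a b 0 0 := by
  rcases mul_eq_zero.1 hab with rfl | rfl
  · have hb : b = 1 ∨ b = -1 := Int.isUnit_iff.1 (IsUnit.of_mul_eq_one y (by linarith))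
    have e : b * b = 1 := by rcases hb with rfl | rfl <;> norm_num
    apply h1 (-b); apply h2 1; apply h3 1; apply h4 (-b)
    convert h0 using 1 <;> ring_nf
    all_goals (rcases hb with rfl | rfl <;> norm_num)
  · have hb : a = 1 ∨ a = -1 := Int.isUnit_iff.1 (IsUnit.of_mul_eq_one x (by linarith))
    apply h3 (-a); apply h2 (1 - a); apply h3 1
    convert h0 using 1
    all_goals (rcases hb with rfl | rfl <;> norm_num)

def Reach (K : Subgroup GU) (v u : Fin 6 → ℤ) : Prop :=
  ∃ h ∈ K, (h : Matrix (Fin 6) (Fin 6) ℤ) *ᵥ v = u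

lemma Reach.trans {K v u z} (h : Reach K v u) (h' : Reach K u z) : Reach K v z := by
  obtain ⟨a, ha, rfl⟩ := h
  obtain ⟨b, hb, rfl⟩ := h'
  exact ⟨b * a, K.mul_mem hb ha, by simp⟩

lemma Reach.refl (K v) : Reach K v v := ⟨1, K.one_mem, by simp⟩

lemma Reach.step {K : Subgroup GU} {p q h n v u} (hK : TU p q h n ∈ K)
    (e : T p q n *ᵥ v = u) : Reach K v u := ⟨_, hK, e⟩

lemma red12 (K : Subgroup GU) (hK : ∀ p q h n, TU p q h n ∈ K) (x y : ℤ) : ∀ a b c d : ℤ,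
    ∃ a' b', Reach K ![a, b, c, d, x, y] ![a', b', 0, 0, x, y] := by
  have st : ∀ p q n v u, Val p q → T p q n *ᵥ v = u → Reach K v u :=
    fun p q n v u h e => Reach.step (hK p q h n) e
  apply smith
  · rintro n a b c d ⟨a', b', h⟩
    refine ⟨a', b', (st 0 2 n _ _ (by decide) ?_).trans h⟩
    funext i; rw [T_mulVec]; fin_cases i <;> simp [sg]; ring
  · rintro n a b c d ⟨a', b', h⟩
    refine ⟨a', b', (st 0 3 n _ _ (by decide) ?_).trans h⟩
    funext i; rw [T_mulVec]; fin_cases i <;> simp [sg]; ring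
  · rintro n a b c d ⟨a', b', h⟩
    refine ⟨a', b', (st 1 2 n _ _ (by decide) ?_).trans h⟩
    funext i; rw [T_mulVec]; fin_cases i <;> simp [sg]; ring
  · rintro n a b c d ⟨a', b', h⟩
    refine ⟨a', b', (st 1 3 n _ _ (by decide) ?_).trans h⟩
    funext i; rw [T_mulVec]; fin_cases i <;> simp [sg]; ring
  · intro a b
    exact ⟨a, b, Reach.refl _ _⟩

lemma red13 (K : Subgroup GU) (hK : ∀ p q h n, TU p q h n ∈ K) (x y : ℤ) : ∀ a b c d : ℤ,
    ∃ a' b', Reach K ![a, b, x, y, c, d] ![a', b', x, y, 0, 0] := by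
  have st : ∀ p q n v u, Val p q → T p q n *ᵥ v = u → Reach K v u :=
    fun p q n v u h e => Reach.step (hK p q h n) e
  apply smith
  · rintro n a b c d ⟨a', b', h⟩
    refine ⟨a', b', (st 0 4 n _ _ (by decide) ?_).trans h⟩
    funext i; rw [T_mulVec]; fin_cases i <;> simp [sg]; ring
  · rintro n a b c d ⟨a', b', h⟩
    refine ⟨a', b', (st 0 5 n _ _ (by decide) ?_).trans h⟩
    funext i; rw [T_mulVec]; fin_cases i <;> simp [sg]; ring
  · rintro n a b c d ⟨a', b', h⟩
    refine ⟨a', b', (st 1 4 n _ _ (by decide) ?_).trans h⟩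
    funext i; rw [T_mulVec]; fin_cases i <;> simp [sg]; ring
  · rintro n a b c d ⟨a', b', h⟩
    refine ⟨a', b', (st 1 5 n _ _ (by decide) ?_).trans h⟩
    funext i; rw [T_mulVec]; fin_cases i <;> simp [sg]; ring
  · intro a b
    exact ⟨a, b, Reach.refl _ _⟩

lemma red23 (K : Subgroup GU) (hK : ∀ p q h n, 2 ≤ p → 2 ≤ q → TU p q h n ∈ K) (x y : ℤ) :
    ∀ a b c d : ℤ, ∃ a' b', Reach K ![x, y, a, b, c, d] ![x, y, a', b', 0, 0] := by
  have st : ∀ p q n v u, Val p q ∧ 2 ≤ p ∧ 2 ≤ q → T p q n *ᵥ v = u → Reach K v u :=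
    fun p q n v u h e => Reach.step (hK p q h.1 n h.2.1 h.2.2) e
  apply smith
  · rintro n a b c d ⟨a', b', h⟩
    refine ⟨a', b', (st 2 4 n _ _ (by decide) ?_).trans h⟩
    funext i; rw [T_mulVec]; fin_cases i <;> simp [sg]; ring
  · rintro n a b c d ⟨a', b', h⟩
    refine ⟨a', b', (st 2 5 n _ _ (by decide) ?_).trans h⟩
    funext i; rw [T_mulVec]; fin_cases i <;> simp [sg]; ring
  · rintro n a b c d ⟨a', b', h⟩
    refine ⟨a', b', (st 3 4 n _ _ (by decide) ?_).trans h⟩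
    funext i; rw [T_mulVec]; fin_cases i <;> simp [sg]; ring
  · rintro n a b c d ⟨a', b', h⟩
    refine ⟨a', b', (st 3 5 n _ _ (by decide) ?_).trans h⟩
    funext i; rw [T_mulVec]; fin_cases i <;> simp [sg]; ring
  · intro a b
    exact ⟨a, b, Reach.refl _ _⟩

lemma uni1 (K : Subgroup GU) (hK : ∀ p q h n, TU p q h n ∈ K) (a b x y : ℤ) (hab : a * b = 0)
    (hu : a * x + b * y = 1) : Reach K ![a, b, 0, 0, 0, 0] ![1, 0, 0, 0, 0, 0] := by
  have st : ∀ p q n v u, Val p q → T p q n *ᵥ v = u → Reach K v u :=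
    fun p q n v u h e => Reach.step (hK p q h n) e
  refine unitize (fun a b c d => Reach K ![a, b, c, d, 0, 0] ![1, 0, 0, 0, 0, 0])
    ?_ ?_ ?_ ?_ (Reach.refl _ _) a b x y hab hu
  · rintro n a b c d h
    refine (st 0 2 n _ _ (by decide) ?_).trans h
    funext i; rw [T_mulVec]; fin_cases i <;> simp [sg]; ring
  · rintro n a b c d h
    refine (st 0 3 n _ _ (by decide) ?_).trans h
    funext i; rw [T_mulVec]; fin_cases i <;> simp [sg]; ring
  · rintro n a b c d h
    refine (st 1 2 n _ _ (by decide) ?_).trans h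
    funext i; rw [T_mulVec]; fin_cases i <;> simp [sg]; ring
  · rintro n a b c d h
    refine (st 1 3 n _ _ (by decide) ?_).trans h
    funext i; rw [T_mulVec]; fin_cases i <;> simp [sg]; ring

lemma uni2 (K : Subgroup GU) (hK : ∀ p q h n, 2 ≤ p → 2 ≤ q → TU p q h n ∈ K)
    (a b x y : ℤ) (hab : a * b = 0)
    (hu : a * x + b * y = 1) : Reach K ![0, 0, a, b, 0, 0] ![0, 0, 1, 0, 0, 0] := by
  have st : ∀ p q n v u, Val p q ∧ 2 ≤ p ∧ 2 ≤ q → T p q n *ᵥ v = u → Reach K v u :=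
    fun p q n v u h e => Reach.step (hK p q h.1 n h.2.1 h.2.2) e
  refine unitize (fun a b c d => Reach K ![0, 0, a, b, c, d] ![0, 0, 1, 0, 0, 0])
    ?_ ?_ ?_ ?_ (Reach.refl _ _) a b x y hab hu
  · rintro n a b c d h
    refine (st 2 4 n _ _ (by decide) ?_).trans h
    funext i; rw [T_mulVec]; fin_cases i <;> simp [sg]; ring
  · rintro n a b c d h
    refine (st 2 5 n _ _ (by decide) ?_).trans h
    funext i; rw [T_mulVec]; fin_cases i <;> simp [sg]; ring
  · rintro n a b c d h
    refine (st 3 4 n _ _ (by decide) ?_).trans h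
    funext i; rw [T_mulVec]; fin_cases i <;> simp [sg]; ring
  · rintro n a b c d h
    refine (st 3 5 n _ _ (by decide) ?_).trans h
    funext i; rw [T_mulVec]; fin_cases i <;> simp [sg]; ring

def BZ (x y : Fin 6 → ℤ) : ℤ :=
  x 0 * y 1 + x 1 * y 0 + x 2 * y 3 + x 3 * y 2 + x 4 * y 5 + x 5 * y 4

lemma BZ_eq (x y) : BZ x y = x ⬝ᵥ (U3G *ᵥ y) := by
  simp [BZ, U3G, dotProduct, mulVec, Fin.sum_univ_succ]
  ring

lemma BZ_inv {g : GU} (h : g ∈ SO) (x y) :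
    BZ ((g : Matrix (Fin 6) (Fin 6) ℤ) *ᵥ x) ((g : Matrix (Fin 6) (Fin 6) ℤ) *ᵥ y) = BZ x y := by
  have h : IsIsometry U3G (g : Matrix (Fin 6) (Fin 6) ℤ) := h.1
  simp only [BZ_eq]
  conv_rhs => rw [← h]
  rw [← Matrix.mulVec_mulVec, ← Matrix.mulVec_mulVec, Matrix.dotProduct_mulVec x, Matrix.vecMul_transpose]

lemma eta6 (v : Fin 6 → ℤ) : v = ![v 0, v 1, v 2, v 3, v 4, v 5] := by
  funext i; fin_cases i <;> rfl

def E1 : Fin 6 → ℤ := ![1,0,0,0,0,0]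
def F1 : Fin 6 → ℤ := ![0,1,0,0,0,0]
def E2 : Fin 6 → ℤ := ![0,0,1,0,0,0]
def F2 : Fin 6 → ℤ := ![0,0,0,1,0,0]
def E3 : Fin 6 → ℤ := ![0,0,0,0,1,0]
def F3 : Fin 6 → ℤ := ![0,0,0,0,0,1]

lemma last {g : GU} (hg : g ∈ SO) (h1 : g ∈ Fx E1) (h2 : g ∈ Fx F1) (h3 : g ∈ Fx E2)
    (h4 : g ∈ Fx F2) : g = 1 := by
  set M := (g : Matrix (Fin 6) (Fin 6) ℤ) with hM
  rw [mem_Fx] at h1 h2 h3 h4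
  have b := BZ_inv hg
  have a15 := b E1 E3
  have a16 := b E1 F3
  have a25 := b F1 E3
  have a26 := b F1 F3
  have a35 := b E2 E3
  have a36 := b E2 F3
  have a45 := b F2 E3
  have a46 := b F2 F3
  have a55 := b E3 E3
  have a66 := b F3 F3
  have a56 := b E3 F3
  rw [h1] at a15 a16
  rw [h2] at a25 a26
  rw [h3] at a35 a36
  rw [h4] at a45 a46
  rw [← hM] at *
  have col : ∀ i j, M i j = (M *ᵥ (Pi.single j 1)) i := by intro i j; simp
  have s0 : (Pi.single 0 1 : Fin 6 → ℤ) = E1 := by decide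
  have s1 : (Pi.single 1 1 : Fin 6 → ℤ) = F1 := by decide
  have s2 : (Pi.single 2 1 : Fin 6 → ℤ) = E2 := by decide
  have s3 : (Pi.single 3 1 : Fin 6 → ℤ) = F2 := by decide
  have s4 : (Pi.single 4 1 : Fin 6 → ℤ) = E3 := by decide
  have s5 : (Pi.single 5 1 : Fin 6 → ℤ) = F3 := by decide
  have hdet : M.det = 1 := hg.2.1
  have ho := (orient_iff M).1 hg.2.2 3 w0 w0_max
  set u := M *ᵥ E3 with hu
  set w := M *ᵥ F3 with hw
  simp [BZ, E1, F1, E2, F2, E3, F3] at a15 a16 a25 a26 a35 a36 a45 a46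
  have b55 : BZ E3 E3 = 0 := by decide
  have b56 : BZ E3 F3 = 1 := by decide
  have b66 : BZ F3 F3 = 0 := by decide
  rw [b55] at a55
  rw [b66] at a66
  rw [b56] at a56
  simp only [BZ, a15, a16, a25, a26, a35, a36, a45, a46] at a55 a56 a66
  have hMat : M = !![1,0,0,0,0,0; 0,1,0,0,0,0; 0,0,1,0,0,0; 0,0,0,1,0,0;
      0,0,0,0,u 4,w 4; 0,0,0,0,u 5, w 5] := by
    ext i j
    rw [col]
    fin_cases j
    · simp only [Fin.zero_eta]
      rw [s0, h1]; fin_cases i <;> rfl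
    · simp only [Fin.mk_one]
      rw [s1, h2]; fin_cases i <;> rfl
    · simp only [Fin.reduceFinMk]
      rw [s2, h3]; fin_cases i <;> rfl
    · simp only [Fin.reduceFinMk]
      rw [s3, h4]; fin_cases i <;> rfl
    · simp only [Fin.reduceFinMk]
      rw [s4, ← hu]; fin_cases i <;> simp [a15, a16, a25, a26, a35, a36, a45, a46]
    · simp only [Fin.reduceFinMk]
      rw [s5, ← hw]; fin_cases i <;> simp [a15, a16, a25, a26, a35, a36, a45, a46]
  have hd2 : u 4 * w 5 - w 4 * u 5 = 1 := by
    rw [hMat] at hdet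
    simp [Matrix.det_succ_row_zero, Fin.sum_univ_succ, Fin.succAbove] at hdet
    linarith
  have hor : 0 < u 4 + u 5 + w 4 + w 5 := by
    have e : cm BM w0 (fun j => rl M *ᵥ w0 j) = !![2,0,0;0,2,0;0,0,((u 4 + u 5 + w 4 + w 5 : ℤ) : ℝ)] := by
      rw [hMat]
      ext i j
      simp only [cm, Matrix.of_apply, BM_exp]
      fin_cases i <;> fin_cases j <;>
        simp [w0, rl, mulVec, dotProduct, Fin.sum_univ_succ] <;> ring
    rw [e, Matrix.det_fin_three] at ho
    simp at ho
    have : (0:ℝ) < ((u 4 + u 5 + w 4 + w 5 : ℤ) : ℝ) := by push_cast; linarith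
    exact_mod_cast this
  have h45 : u 4 * u 5 = 0 := by linarith
  have hw45 : w 4 * w 5 = 0 := by linarith
  have hp : u 4 * w 5 = 1 := by linarith
  have hu4 : u 4 = 1 ∨ u 4 = -1 := Int.isUnit_iff.1 (IsUnit.of_mul_eq_one _ hp)
  have : u 4 = 1 ∧ u 5 = 0 ∧ w 4 = 0 ∧ w 5 = 1 := by
    rcases hu4 with h | h <;> rw [h] at hp h45 hor
    · have hw5 : w 5 = 1 := by linarith
      rw [hw5] at hw45
      refine ⟨h, by linarith, by linarith, hw5⟩
    · have hw5 : w 5 = -1 := by linarith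
      rw [hw5] at hw45 hor
      exfalso; linarith
  apply Units.ext
  change M = 1
  rw [hMat, this.1, this.2.1, this.2.2.1, this.2.2.2]
  decide

lemma main (H : Subgroup GU) (hH : ∀ p q h n, TU p q h n ∈ H) (hle : H ≤ SO) : SO ≤ H := by
  intro g0 hg0
  -- step 1
  have bq : ∀ g ∈ SO, BZ ((g : Matrix (Fin 6) (Fin 6) ℤ) *ᵥ E1) ((g : Matrix (Fin 6) (Fin 6) ℤ) *ᵥ E1) = 0 := by
    intro g hg; rw [BZ_inv hg]; decide
  have S1 : ∃ h ∈ H, h * g0 ∈ Fx E1 := by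
    set v := (g0 : Matrix (Fin 6) (Fin 6) ℤ) *ᵥ E1 with hv
    obtain ⟨a, b, r⟩ := red12 H hH (v 4) (v 5) (v 0) (v 1) (v 2) (v 3)
    rw [← eta6 v] at r
    obtain ⟨a', b', r'⟩ := red13 H hH 0 0 a b (v 4) (v 5)
    have r := r.trans r'
    obtain ⟨h, hh, e⟩ := r
    have hs := SO.mul_mem (hle hh) hg0
    have q1 := BZ_inv hs E1 E1
    have q2 := BZ_inv hs E1 F1
    rw [Units.val_mul, ← Matrix.mulVec_mulVec, ← hv, e] at q1 q2
    generalize (((h : Matrix (Fin 6) (Fin 6) ℤ)) * (g0 : Matrix (Fin 6) (Fin 6) ℤ)) *ᵥ F1 = z at q2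
    simp [BZ, E1, F1] at q1 q2
    have q3 : a' * b' = 0 := by
      linarith
    obtain ⟨h', hh', e'⟩ := uni1 H hH a' b' (z 1) (z 0) q3 (by linarith)
    refine ⟨h' * h, H.mul_mem hh' hh, ?_⟩
    rw [mem_Fx, mul_assoc, Units.val_mul, Units.val_mul, ← Matrix.mulVec_mulVec, ← Matrix.mulVec_mulVec, ← hv, e, e']
    rfl
  obtain ⟨h1, hh1, f1⟩ := S1
  rw [← H.mul_mem_cancel_left hh1]
  have hg1 := SO.mul_mem (hle hh1) hg0
  generalize h1 * g0 = g1 at f1 hg1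
  clear! g0
  -- step 2
  have S2 : ∃ h ∈ H, h * g1 ∈ Fx E1 ∧ h * g1 ∈ Fx F1 := by
    set w := (g1 : Matrix (Fin 6) (Fin 6) ℤ) *ᵥ F1 with hw
    have q := BZ_inv hg1 E1 F1
    rw [mem_Fx] at f1
    rw [f1, ← hw] at q
    simp [BZ, E1, F1] at q
    have R : ∃ a, Reach (H ⊓ Fx E1) w ![a, 1, 0, 0, 0, 0] := by
      have st : ∀ q n v u, (h : Val 0 q) → T 0 q n *ᵥ v = u → Reach (H ⊓ Fx E1) v u := by
        intro q n v u h e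
        refine Reach.step (h := h) ⟨hH 0 q h n, ?_⟩ e
        change T _ _ n *ᵥ _ = _
        funext i; rw [T_mulVec]
        fin_cases q <;> simp [sg, Val] at h <;> fin_cases i <;> simp [sg, E1]
      refine ⟨_, (st 2 (w 2) w ![w 0 + w 2 * w 3, 1, 0, w 3, w 4, w 5] (by decide) ?_).trans
        ((st 3 (w 3) _ ![w 0 + w 2 * w 3, 1, 0, 0, w 4, w 5] (by decide) ?_).trans
        ((st 4 (w 4) _ ![w 0 + w 2 * w 3 + w 4 * w 5, 1, 0, 0, 0, w 5] (by decide) ?_).trans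
        (st 5 (w 5) _ ![w 0 + w 2 * w 3 + w 4 * w 5, 1, 0, 0, 0, 0] (by decide) ?_)))⟩
      all_goals
        funext i; rw [T_mulVec]; fin_cases i <;> simp [sg, q]
    obtain ⟨a, h, hh, e⟩ := R
    have hs := SO.mul_mem (hle hh.1) hg1
    have q2 := BZ_inv hs F1 F1
    rw [Units.val_mul, ← Matrix.mulVec_mulVec, ← hw, e] at q2
    simp [BZ, F1] at q2
    have q2 : a = 0 := by linarith
    subst q2
    refine ⟨h, hh.1, (Fx E1).mul_mem hh.2 f1, ?_⟩
    rw [mem_Fx, Units.val_mul, ← Matrix.mulVec_mulVec, ← hw, e]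
    rfl
  obtain ⟨h2, hh2, f1, f2⟩ := S2
  rw [← H.mul_mem_cancel_left hh2]
  have hg2 := SO.mul_mem (hle hh2) hg1
  generalize h2 * g1 = g2 at f1 f2 hg2
  clear! g1
  -- step 3
  have hK : ∀ p q h n, 2 ≤ p → 2 ≤ q → TU p q h n ∈ H ⊓ (Fx E1 ⊓ Fx F1) := by
    intro p q h n hp hq
    have z : ∀ q : Fin 6, 2 ≤ q → E1 (sg q) = 0 ∧ F1 (sg q) = 0 := by decide
    refine ⟨hH p q h n, ?_, ?_⟩
    · change T p q n *ᵥ _ = _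
      funext i; rw [T_mulVec, (z p hp).1, (z q hq).1]; simp
    · change T p q n *ᵥ _ = _
      funext i; rw [T_mulVec, (z p hp).2, (z q hq).2]; simp
  have S3 : ∃ h ∈ H, h * g2 ∈ Fx E1 ∧ h * g2 ∈ Fx F1 ∧ h * g2 ∈ Fx E2 := by
    set v := (g2 : Matrix (Fin 6) (Fin 6) ℤ) *ᵥ E2 with hv
    have c0 := BZ_inv hg2 E1 E2
    have c1 := BZ_inv hg2 F1 E2
    rw [mem_Fx] at f1 f2
    rw [f1, ← hv] at c0
    rw [f2, ← hv] at c1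
    simp [BZ, E1, F1, E2] at c0 c1
    obtain ⟨a', b', r⟩ := red23 _ hK 0 0 (v 2) (v 3) (v 4) (v 5)
    have ev := eta6 v
    rw [c0, c1] at ev
    rw [← ev] at r
    obtain ⟨h, hh, e⟩ := r
    have hs := SO.mul_mem (hle hh.1) hg2
    have q1 := BZ_inv hs E2 E2
    have q2 := BZ_inv hs E2 F2
    rw [Units.val_mul, ← Matrix.mulVec_mulVec, ← hv, e] at q1 q2
    generalize (((h : Matrix (Fin 6) (Fin 6) ℤ)) * (g2 : Matrix (Fin 6) (Fin 6) ℤ)) *ᵥ F2 = z at q2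
    simp [BZ, E2, F2] at q1 q2
    have q3 : a' * b' = 0 := by
      linarith
    obtain ⟨h', hh', e'⟩ := uni2 _ hK a' b' (z 3) (z 2) q3 (by linarith)
    have hm := (H ⊓ (Fx E1 ⊓ Fx F1)).mul_mem hh' hh
    refine ⟨h' * h, hm.1, (Fx E1).mul_mem hm.2.1 f1, (Fx F1).mul_mem hm.2.2 f2, ?_⟩
    rw [mem_Fx, mul_assoc, Units.val_mul, Units.val_mul, ← Matrix.mulVec_mulVec, ← Matrix.mulVec_mulVec, ← hv, e, e']
    rfl
  obtain ⟨h3, hh3, f1, f2, f3⟩ := S3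
  rw [← H.mul_mem_cancel_left hh3]
  have hg3 := SO.mul_mem (hle hh3) hg2
  generalize h3 * g2 = g3 at f1 f2 f3 hg3
  clear! g2
  -- step 4
  have S4 : ∃ h ∈ H, h * g3 ∈ Fx E1 ∧ h * g3 ∈ Fx F1 ∧ h * g3 ∈ Fx E2 ∧ h * g3 ∈ Fx F2 := by
    set w := (g3 : Matrix (Fin 6) (Fin 6) ℤ) *ᵥ F2 with hw
    have c0 := BZ_inv hg3 E1 F2
    have c1 := BZ_inv hg3 F1 F2
    have q := BZ_inv hg3 E2 F2
    rw [mem_Fx] at f1 f2 f3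
    rw [f1, ← hw] at c0
    rw [f2, ← hw] at c1
    rw [f3, ← hw] at q
    simp [BZ, E1, F1, E2, F2] at c0 c1 q
    have R : ∃ a, Reach (H ⊓ (Fx E1 ⊓ Fx F1) ⊓ Fx E2) w ![0, 0, a, 1, 0, 0] := by
      have st : ∀ q n v u, (h : Val 2 q ∧ 2 ≤ q) → T 2 q n *ᵥ v = u →
          Reach (H ⊓ (Fx E1 ⊓ Fx F1) ⊓ Fx E2) v u := by
        intro q n v u h e
        refine Reach.step (h := h.1) ⟨hK 2 q h.1 n le_rfl h.2, ?_⟩ e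
        change T _ _ n *ᵥ _ = _
        funext i; rw [T_mulVec]
        fin_cases q <;> simp [sg, Val] at h <;> fin_cases i <;> simp [sg, E2]
      refine ⟨_, (st 4 (w 4) w ![0, 0, w 2 + w 4 * w 5, 1, 0, w 5] (by decide) ?_).trans
        (st 5 (w 5) _ ![0, 0, w 2 + w 4 * w 5, 1, 0, 0] (by decide) ?_)⟩
      all_goals
        funext i; rw [T_mulVec]; fin_cases i <;> simp [sg, q, c0, c1]
    obtain ⟨a, h, hh, e⟩ := R
    have hs := SO.mul_mem (hle hh.1.1) hg3
    have q2 := BZ_inv hs F2 F2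
    rw [Units.val_mul, ← Matrix.mulVec_mulVec, ← hw, e] at q2
    simp [BZ, F2] at q2
    have q2 : a = 0 := by linarith
    subst q2
    refine ⟨h, hh.1.1, (Fx E1).mul_mem hh.1.2.1 f1, (Fx F1).mul_mem hh.1.2.2 f2,
      (Fx E2).mul_mem hh.2 f3, ?_⟩
    rw [mem_Fx, Units.val_mul, ← Matrix.mulVec_mulVec, ← hw, e]
    rfl
  obtain ⟨h4, hh4, f1, f2, f3, f4⟩ := S4
  rw [← H.mul_mem_cancel_left hh4, last (SO.mul_mem (hle hh4) hg3) f1 f2 f3 f4]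
  exact H.one_mem

end red

end Aux

/-- For every `d ≥ 1`, the group `SO⁺(U³)` is generated by the union of the stabilizers
`SO⁺_{e₁+df₁}(U³) ∪ SO⁺_{de₁+f₁}(U³) ∪ SO⁺_{e₁+(d+1)f₁}(U³) ∪ SO⁺_{(d+1)e₁+f₁}(U³)`,
where `{e₁,f₁}` is the standard basis of the first copy of `U` in `U³`. -/
theorem stmt_6 (d : ℤ) (hd : 0 < d) :
    (Subgroup.closure
        (SOplusStab ![1, d, 0, 0, 0, 0] ∪ SOplusStab ![d, 1, 0, 0, 0, 0] ∪
          SOplusStab ![1, d + 1, 0, 0, 0, 0] ∪ SOplusStab ![d + 1, 1, 0, 0, 0, 0]) :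
      Set ((Matrix (Fin 6) (Fin 6) ℤ)ˣ)) =
    {g : (Matrix (Fin 6) (Fin 6) ℤ)ˣ |
      IsIsometry U3G (g : Matrix (Fin 6) (Fin 6) ℤ) ∧
        (g : Matrix (Fin 6) (Fin 6) ℤ).det = 1 ∧
        OrientPres U3G (g : Matrix (Fin 6) (Fin 6) ℤ)} := by
  simp only [Aux.stab_eq]
  change _ = ((Aux.SO : Subgroup Aux.GU) : Set Aux.GU)
  rw [SetLike.coe_set_eq]
  set H := Subgroup.closure
        ((Aux.SO ⊓ Aux.Fx ![1, d, 0, 0, 0, 0] : Subgroup Aux.GU) ∪ (Aux.SO ⊓ Aux.Fx ![d, 1, 0, 0, 0, 0] : Subgroup Aux.GU) ∪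
          (Aux.SO ⊓ Aux.Fx ![1, d + 1, 0, 0, 0, 0] : Subgroup Aux.GU) ∪ (Aux.SO ⊓ Aux.Fx ![d + 1, 1, 0, 0, 0, 0] : Subgroup Aux.GU) : Set Aux.GU) with hH
  have hle : H ≤ Aux.SO := by
    rw [hH, Subgroup.closure_le]
    rintro g (((h | h) | h) | h) <;> exact h.1
  refine le_antisymm hle (Aux.main H (Aux.elem_mem d H ?_ ?_ ?_ ?_) hle)
  · exact fun g h => Subgroup.subset_closure (Or.inl (Or.inl (Or.inl h)))
  · exact fun g h => Subgroup.subset_closure (Or.inl (Or.inl (Or.inr h)))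
  · exact fun g h => Subgroup.subset_closure (Or.inl (Or.inr h))
  · exact fun g h => Subgroup.subset_closure (Or.inr h)
end

section
/- Let Λ be an even unimodular lattice and w ∈ Λ with (w,w) = 2. Then every isometry γ of the orthogonal complement w^⊥ ⊆ Λ extends uniquely to an isometry γ̃ of Λ satisfying γ̃(w) = w. -/
theorem aux_div {Λ : Type*} [AddCommGroup Λ]
    (B : LinearMap.BilinForm ℤ Λ)
    (hunimod : Function.Bijective fun x : Λ => (B x : Λ →ₗ[ℤ] ℤ))
    (v : Λ) (hv : ∀ y, ∃ k : ℤ, B v y = 2 * k) : ∃ z : Λ, v = (2 : ℤ) • z := by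
  choose φ hφ using hv
  obtain ⟨z, hz⟩ := hunimod.2
    { toFun := φ
      map_add' := fun x y => by
        have := hφ (x + y)
        rw [map_add, hφ x, hφ y] at this
        linarith
      map_smul' := fun c x => by
        have := hφ (c • x)
        rw [map_smul, hφ x, smul_eq_mul] at this
        simp only [RingHom.id_apply, smul_eq_mul]
        linarith }
  refine ⟨z, hunimod.1 ?_⟩
  ext y
  have h2 : B z y = φ y := by
    have := LinearMap.congr_fun hz y
    simpa using this
  simp only [map_smul, LinearMap.smul_apply, smul_eq_mul]
  rw [hφ y, h2]

theorem aux_u {Λ : Type*} [AddCommGroup Λ]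
    (B : LinearMap.BilinForm ℤ Λ)
    (hunimod : Function.Bijective fun x : Λ => (B x : Λ →ₗ[ℤ] ℤ))
    (w : Λ) (hw : B w w = 2) : ∃ u : Λ, B w u = 1 := by
  by_cases h : ∀ y, ∃ k : ℤ, B w y = 2 * k
  · exfalso
    obtain ⟨z, hz⟩ := aux_div B hunimod w h
    rw [hz] at hw
    simp only [map_smul, LinearMap.smul_apply, smul_eq_mul] at hw
    omega
  · push Not at h
    obtain ⟨y, hy⟩ := h
    refine ⟨y - (B w y / 2) • w, ?_⟩
    rw [map_sub, map_smul, hw, smul_eq_mul]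
    have := hy (B w y / 2)
    omega

theorem aux_half {Λ : Type*} [AddCommGroup Λ]
    (B : LinearMap.BilinForm ℤ Λ)
    (hsymm : ∀ x y : Λ, B x y = B y x)
    (hunimod : Function.Bijective fun x : Λ => (B x : Λ →ₗ[ℤ] ℤ))
    (w : Λ) (hw : B w w = 2)
    (γ : (LinearMap.ker (B w)) ≃ₗ[ℤ] (LinearMap.ker (B w)))
    (hγ : ∀ x y : LinearMap.ker (B w), B (γ x : Λ) (γ y : Λ) = B (x : Λ) (y : Λ))
    (x : Λ) (p : LinearMap.ker (B w)) (hp : (p : Λ) = (2 : ℤ) • x - (B w x) • w) :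
    ∃ z : Λ, (2 : ℤ) • z = (γ p : Λ) + (B w x) • w := by
  obtain ⟨u, hu⟩ := aux_u B hunimod w hw
  have hker : ∀ a : LinearMap.ker (B w), B w a = 0 := fun a => LinearMap.mem_ker.1 a.2
  have hker' : ∀ a : LinearMap.ker (B w), B a w = 0 := fun a => by rw [hsymm, hker]
  obtain ⟨k, hk⟩ : ∃ k : LinearMap.ker (B w), (k : Λ) = (2 : ℤ) • u - w :=
    ⟨⟨(2 : ℤ) • u - w, by
      rw [LinearMap.mem_ker, map_sub, map_smul, hw, hu]; rfl⟩, rfl⟩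
  have dec : ∀ y : Λ, ∃ a : LinearMap.ker (B w), y = a + (B w y) • u := fun y =>
    ⟨⟨y - (B w y) • u, by
      rw [LinearMap.mem_ker, map_sub, map_smul, hu, smul_eq_mul]; ring⟩, by simp⟩
  have hkx : ∀ a : LinearMap.ker (B w), B (γ k) a = 2 * B u (γ.symm a) := fun a => by
    have := hγ k (γ.symm a)
    rw [LinearEquiv.apply_symm_apply] at this
    rw [this, hk]
    simp only [map_sub, map_smul, LinearMap.sub_apply, LinearMap.smul_apply, smul_eq_mul, hker]
    ring
  have hodd : ¬ ∃ c : ℤ, B (γ k) u = 2 * c := by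
    rintro ⟨c, hc⟩
    obtain ⟨z, hz⟩ := aux_div B hunimod (γ k : Λ) (fun y => by
      obtain ⟨a, ha⟩ := dec y
      refine ⟨B u (γ.symm a) + B w y * c, ?_⟩
      conv_lhs => rw [ha]
      rw [map_add, map_smul, hkx, hc, smul_eq_mul]
      ring)
    have h1 := hγ k k
    rw [hz, hk] at h1
    have h2 := hsymm u w
    simp only [map_sub, map_smul, LinearMap.sub_apply, LinearMap.smul_apply, smul_eq_mul, h2, hu,
      hw] at h1
    omega
  obtain ⟨u', hu'⟩ := aux_div B hunimod ((γ k : Λ) + w) (fun y => by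
    obtain ⟨a, ha⟩ := dec y
    refine ⟨B u (γ.symm a) + B w y * ((B (γ k) u + 1) / 2), ?_⟩
    have h3 : B (γ k) u + 1 = 2 * ((B (γ k) u + 1) / 2) := by
      have : ¬ B (γ k) u = 2 * (B (γ k) u / 2) := fun h => hodd ⟨_, h⟩
      omega
    have h4 : B ((γ k : Λ) + w) y = 2 * B u (γ.symm a) + B w y * (B (γ k) u + 1) := by
      conv_lhs => rw [ha]
      simp only [map_add, map_smul, LinearMap.add_apply, hkx, hker, hu, smul_eq_mul]
      ring
    rw [h4, h3, Int.mul_ediv_cancel_left _ (by norm_num)]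
    ring)
  obtain ⟨a, ha⟩ := dec x
  have hpa : p = (2 : ℤ) • a + (B w x) • k := by
    apply Subtype.ext
    rw [hp]
    simp only [Submodule.coe_add, Submodule.coe_smul, hk]
    generalize B w x = m at *
    rw [ha]
    module
  refine ⟨γ a + (B w x) • u', ?_⟩
  rw [hpa, map_add, map_smul, map_smul]
  simp only [Submodule.coe_add, Submodule.coe_smul]
  have : (γ k : Λ) = (2 : ℤ) • u' - w := by rw [← hu']; abel
  rw [this]
  module

theorem aux_ext {Λ : Type*} [AddCommGroup Λ]
    [Module.Free ℤ Λ]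
    (B : LinearMap.BilinForm ℤ Λ)
    (hsymm : ∀ x y : Λ, B x y = B y x)
    (hunimod : Function.Bijective fun x : Λ => (B x : Λ →ₗ[ℤ] ℤ))
    (w : Λ) (hw : B w w = 2) (p : Λ →ₗ[ℤ] LinearMap.ker (B w))
    (hp : ∀ x, (p x : Λ) = (2 : ℤ) • x - (B w x) • w)
    (γ : (LinearMap.ker (B w)) ≃ₗ[ℤ] (LinearMap.ker (B w)))
    (hγ : ∀ x y : LinearMap.ker (B w), B (γ x : Λ) (γ y : Λ) = B (x : Λ) (y : Λ)) :
    ∃ f : Λ →ₗ[ℤ] Λ, ∀ x, (2 : ℤ) • f x = (γ (p x) : Λ) + (B w x) • w := by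
  have hc : ∀ a b : Λ, (2 : ℤ) • a = (2 : ℤ) • b → a = b := fun a b h =>
    smul_right_injective Λ (two_ne_zero (α := ℤ)) h
  choose f hf using fun x => aux_half B hsymm hunimod w hw γ hγ x (p x) (hp x)
  refine ⟨{ toFun := f, map_add' := fun x y => hc _ _ ?_, map_smul' := fun c x => hc _ _ ?_ }, hf⟩
  · rw [smul_add, hf, hf, hf]
    simp only [map_add, Submodule.coe_add]
    module
  · rw [RingHom.id_apply, smul_comm, hf, hf]
    simp only [map_smul, Submodule.coe_smul, smul_eq_mul]
    module

theorem aux_core {Λ : Type*} [AddCommGroup Λ]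
    [Module.Free ℤ Λ] [Module.Finite ℤ Λ]
    (B : LinearMap.BilinForm ℤ Λ)
    (hsymm : ∀ x y : Λ, B x y = B y x)
    (hunimod : Function.Bijective fun x : Λ => (B x : Λ →ₗ[ℤ] ℤ))
    (w : Λ) (hw : B w w = 2)
    (γ : (LinearMap.ker (B w)) ≃ₗ[ℤ] (LinearMap.ker (B w)))
    (hγ : ∀ x y : LinearMap.ker (B w), B (γ x : Λ) (γ y : Λ) = B (x : Λ) (y : Λ)) :
    ∃! γt : Λ ≃ₗ[ℤ] Λ,
      (∀ x y : Λ, B (γt x) (γt y) = B x y) ∧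
      γt w = w ∧
      ∀ x : LinearMap.ker (B w), γt (x : Λ) = (γ x : Λ) := by
  have hc : ∀ a b : Λ, (2 : ℤ) • a = (2 : ℤ) • b → a = b := fun a b h =>
    smul_right_injective Λ (two_ne_zero (α := ℤ)) h
  have hker : ∀ a : LinearMap.ker (B w), B w a = 0 := fun a => LinearMap.mem_ker.1 a.2
  have hker' : ∀ a : LinearMap.ker (B w), B a w = 0 := fun a => by rw [hsymm, hker]
  obtain ⟨p, hp⟩ : ∃ p : Λ →ₗ[ℤ] LinearMap.ker (B w),
      ∀ x, (p x : Λ) = (2 : ℤ) • x - (B w x) • w :=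
    ⟨LinearMap.codRestrict _ ((2 : ℤ) • LinearMap.id - (B w).smulRight w) (fun x => by
      rw [LinearMap.mem_ker]
      simp [hw]
      ring), fun x => rfl⟩
  have hγ' : ∀ x y : LinearMap.ker (B w),
      B (γ.symm x : Λ) (γ.symm y : Λ) = B (x : Λ) (y : Λ) := fun x y => by
    rw [← hγ, LinearEquiv.apply_symm_apply, LinearEquiv.apply_symm_apply]
  obtain ⟨f, hf⟩ := aux_ext B hsymm hunimod w hw p hp γ hγ
  obtain ⟨g, hg⟩ := aux_ext B hsymm hunimod w hw p hp γ.symm hγ'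
  have key : ∀ (δ : (LinearMap.ker (B w)) ≃ₗ[ℤ] (LinearMap.ker (B w))) (f g : Λ →ₗ[ℤ] Λ),
      (∀ x, (2 : ℤ) • f x = (δ (p x) : Λ) + (B w x) • w) →
      (∀ x, (2 : ℤ) • g x = (δ.symm (p x) : Λ) + (B w x) • w) → ∀ x, g (f x) = x := by
    intro δ f g hf hg x
    have h1 : B w (f x) = B w x := by
      have := congrArg (B w) (hf x)
      simp only [map_add, map_smul, hker, hw, smul_eq_mul] at this
      omega
    have h2 : p (f x) = δ (p x) := by
      apply Subtype.ext
      rw [hp, hf, h1]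
      abel
    apply hc
    rw [hg, h1, h2, LinearEquiv.symm_apply_apply, hp]
    abel
  have hpk : ∀ a : LinearMap.ker (B w), p a = (2 : ℤ) • a := fun a => by
    apply Subtype.ext
    rw [hp, hker]
    simp only [Submodule.coe_smul]
    module
  have hpw : p w = 0 := by
    apply Subtype.ext
    rw [hp, hw]
    simp
  refine ⟨LinearEquiv.ofLinearMap f g (LinearMap.ext fun x => key γ.symm g f hg
    (by simpa using hf) x) (LinearMap.ext fun x => key γ f g hf hg x), ⟨?_, ?_, ?_⟩, ?_⟩
  · intro x y
    rw [LinearEquiv.coe_ofLinearMap]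
    have h1 : B ((2 : ℤ) • f x) ((2 : ℤ) • f y) = B ((2 : ℤ) • x) ((2 : ℤ) • y) := by
      have hx : ∀ x, (2 : ℤ) • x = (p x : Λ) + (B w x) • w := fun x => by rw [hp]; abel
      rw [hf, hf, hx x, hx y]
      simp only [map_add, map_smul, LinearMap.add_apply, LinearMap.smul_apply, hker, hker', hγ]
    simp only [map_smul, LinearMap.smul_apply, smul_eq_mul] at h1
    omega
  · rw [LinearEquiv.coe_ofLinearMap]
    apply hc
    rw [hf, hpw, hw]
    simp
  · intro a
    rw [LinearEquiv.coe_ofLinearMap]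
    apply hc
    rw [hf, hpk, hker, map_smul]
    simp
  · rintro h ⟨-, h2, h3⟩
    ext x
    rw [LinearEquiv.coe_ofLinearMap]
    apply hc
    rw [hf, ← h3, hp, map_sub, map_smul, map_smul, h2]
    abel

/-- Let `Λ` be an even unimodular lattice and `w ∈ Λ` with `(w,w) = 2`. Then every isometry
`γ` of the orthogonal complement `w^⊥ ⊆ Λ` extends uniquely to an isometry `γ̃` of `Λ`
with `γ̃(w) = w`. -/
theorem stmt_10 {Λ : Type*} [AddCommGroup Λ] [Module ℤ Λ]
    [Module.Free ℤ Λ] [Module.Finite ℤ Λ]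
    (B : LinearMap.BilinForm ℤ Λ)
    (hsymm : ∀ x y : Λ, B x y = B y x)
    (heven : ∀ x : Λ, ∃ k : ℤ, B x x = 2 * k)
    (hunimod : Function.Bijective fun x : Λ => (B x : Λ →ₗ[ℤ] ℤ))
    (w : Λ) (hw : B w w = 2)
    (γ : (LinearMap.ker (B w)) ≃ₗ[ℤ] (LinearMap.ker (B w)))
    (hγ : ∀ x y : LinearMap.ker (B w), B (γ x : Λ) (γ y : Λ) = B (x : Λ) (y : Λ)) :
    ∃! γt : Λ ≃ₗ[ℤ] Λ,
      (∀ x y : Λ, B (γt x) (γt y) = B x y) ∧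
      γt w = w ∧
      ∀ x : LinearMap.ker (B w), γt (x : Λ) = (γ x : Λ) := by
  rename_i _ iM _ _
  obtain rfl : iM = AddCommGroup.toIntModule Λ := Subsingleton.elim _ _
  exact aux_core B hsymm hunimod w hw γ hγ
end
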